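/- arXiv:math/0201154 — 2 statements merged into one kernel-verified Lean document; each statement's English description precedes it below -/
import Mathlib

section
/- Let p be a rational prime, let c := e/(e−1), and let L be a degree-d field extension of ℚ_p. Let f ∈ L[x] be nonzero. If σ_L(f) ≤ 1, then f has at most 1 + d·p·(p^d−1)/(p−1) distinct roots in L; and if σ_L(f) ≤ 2, then f has at most 1 + d·p·(p^d−1)/(p−1) + (4c·d·p·(p^d−1)²/(p−1))·(1 + d·log_p(2d/log p)) distinct roots in L. -/
open Polynomial Real

/-- `f` admits a presentation of additive complexity `s` over `L`. -/
def HasAddComplexityPres {L : Type*} [Field L] (f : L[X]) (s : ℕ) : Prop :=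
  ∃ (c d : ℕ → L) (m m' : ℕ → ℕ → ℕ) (Xs : ℕ → L[X]),
    Xs 0 = X ∧
    (∀ j, 1 ≤ j → j ≤ s →
      Xs j = C (c j) * ∏ i ∈ Finset.range j, Xs i ^ m i j
           + C (d j) * ∏ i ∈ Finset.range j, Xs i ^ m' i j) ∧
    f = C (c (s+1)) * ∏ i ∈ Finset.range (s+1), Xs i ^ m i (s+1)

/-- The additive complexity `σ_L(f)`: the least `s` admitting such a presentation. -/
noncomputable def addComplexity {L : Type*} [Field L] (f : L[X]) : ℕ :=
  sInf {s | HasAddComplexityPres f s}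

section Ultra

set_option linter.unusedSectionVars false

variable {L : Type*} [NormedField L] [IsUltrametricDist L]

lemma ultra_sub (a b : L) : ‖a - b‖ ≤ max ‖a‖ ‖b‖ := by
  have := IsUltrametricDist.norm_add_le_max a (-b)
  rwa [norm_neg, ← sub_eq_add_neg] at this

lemma two_max (g : L[X]) (hg : g ≠ 0) (x : L) (hx : x ≠ 0) (h : g.eval x = 0) :
    ∃ i j : ℕ, i < j ∧ g.coeff i ≠ 0 ∧ g.coeff j ≠ 0 ∧
      (∀ k, ‖g.coeff k‖ * ‖x‖ ^ k ≤ ‖g.coeff i‖ * ‖x‖ ^ i) ∧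
      (∀ k, ‖g.coeff k‖ * ‖x‖ ^ k ≤ ‖g.coeff j‖ * ‖x‖ ^ j) := by
  classical
  obtain ⟨j, hj, hmax⟩ := Finset.exists_max_image g.support
    (fun k => ‖g.coeff k‖ * ‖x‖ ^ k) (by simpa using hg)
  have hmax' : ∀ k, ‖g.coeff k‖ * ‖x‖ ^ k ≤ ‖g.coeff j‖ * ‖x‖ ^ j := by
    intro k
    by_cases hk : k ∈ g.support
    · exact hmax k hk
    · rw [notMem_support_iff.mp hk]
      simp only [norm_zero, zero_mul]
      positivity
  have hj0 : g.coeff j ≠ 0 := mem_support_iff.mp hj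
  have hsum : g.coeff j * x ^ j + ∑ k ∈ g.support.erase j, g.coeff k * x ^ k = 0 := by
    rw [Finset.add_sum_erase _ (fun k => g.coeff k * x ^ k) hj, ← h, eval_eq_sum, sum_def]
  have hne : (g.support.erase j).Nonempty := by
    by_contra hcon
    rw [Finset.not_nonempty_iff_eq_empty] at hcon
    rw [hcon] at hsum
    simp [hj0, hx] at hsum
  obtain ⟨i, hi, hle⟩ := IsUltrametricDist.exists_norm_finsetSum_le_of_nonempty hne
    (fun k => g.coeff k * x ^ k)
  have hij : i ≠ j := Finset.ne_of_mem_erase hi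
  have hi0 : g.coeff i ≠ 0 := mem_support_iff.mp (Finset.mem_of_mem_erase hi)
  have e1 : ‖∑ k ∈ g.support.erase j, g.coeff k * x ^ k‖ = ‖g.coeff j‖ * ‖x‖ ^ j := by
    rw [← norm_pow, ← norm_mul, ← norm_neg (g.coeff j * x ^ j)]
    congr 1
    exact (neg_eq_of_add_eq_zero_right hsum).symm
  rw [e1, norm_mul, norm_pow] at hle
  rcases lt_or_gt_of_ne hij with hlt | hlt
  · exact ⟨i, j, hlt, hi0, hj0, fun k => (hmax' k).trans hle, hmax'⟩
  · exact ⟨j, i, hlt, hj0, hi0, hmax', fun k => (hmax' k).trans hle⟩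

lemma max_index_mono (g : L[X]) {ρ ρ' : ℝ} (hρ : 0 < ρ) (hlt : ρ < ρ') {i j : ℕ}
    (hj : g.coeff j ≠ 0)
    (h1 : ‖g.coeff i‖ * ρ ^ i ≤ ‖g.coeff j‖ * ρ ^ j)
    (h2 : ‖g.coeff j‖ * ρ' ^ j ≤ ‖g.coeff i‖ * ρ' ^ i) : j ≤ i := by
  by_contra hcon
  push Not at hcon
  obtain ⟨k, rfl⟩ := Nat.exists_eq_add_of_lt hcon
  have hj' : 0 < ‖g.coeff (i + k + 1)‖ := norm_pos_iff.mpr hj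
  set A := ‖g.coeff (i + k + 1)‖
  set B := ‖g.coeff i‖
  have e1 : B ≤ A * ρ ^ (k + 1) := by
    have : B * ρ ^ i ≤ (A * ρ ^ (k + 1)) * ρ ^ i := by
      calc _ ≤ _ := h1
        _ = _ := by ring
    exact le_of_mul_le_mul_right this (by positivity)
  have e2 : A * ρ' ^ (k + 1) ≤ B := by
    have hp : 0 < ρ' := hρ.trans hlt
    have : (A * ρ' ^ (k + 1)) * ρ' ^ i ≤ B * ρ' ^ i := by
      calc _ = A * ρ' ^ (i + k + 1) := by ring
        _ ≤ _ := h2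
    exact le_of_mul_le_mul_right this (by positivity)
  have : ρ ^ (k + 1) < ρ' ^ (k + 1) := pow_lt_pow_left₀ hlt hρ.le (by omega)
  nlinarith

/-- The nonzero roots of a polynomial with at most three terms have at most two norms. -/
lemma card_norms_le_two (g : L[X]) (hg : g ≠ 0) (h3 : g.support.card ≤ 3)
    (S : Finset L) (hS : ∀ x ∈ S, x ≠ 0 ∧ g.eval x = 0) :
    (S.image (fun x => ‖x‖)).card ≤ 2 := by
  classical
  by_contra hcon
  push Not at hcon
  obtain ⟨T, hT, hTc⟩ := Finset.exists_subset_card_eq (Nat.succ_le_of_lt hcon)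
  -- order the three norms
  let e := T.orderEmbOfFin hTc
  have hmem : ∀ i, ∃ x ∈ S, ‖x‖ = e i := by
    intro i
    have := hT (T.orderEmbOfFin_mem hTc i)
    simpa using this
  have key : ∀ i, ∃ a b : ℕ, a < b ∧ g.coeff a ≠ 0 ∧ g.coeff b ≠ 0 ∧ 0 < e i ∧
      (∀ k, ‖g.coeff k‖ * (e i) ^ k ≤ ‖g.coeff a‖ * (e i) ^ a) ∧
      (∀ k, ‖g.coeff k‖ * (e i) ^ k ≤ ‖g.coeff b‖ * (e i) ^ b) := by
    intro i
    obtain ⟨x, hx, hxe⟩ := hmem i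
    obtain ⟨a, b, h1, h2, h3, h4, h5⟩ := two_max g hg x (hS x hx).1 (hS x hx).2
    rw [hxe] at h4 h5
    exact ⟨a, b, h1, h2, h3, hxe ▸ norm_pos_iff.mpr (hS x hx).1, h4, h5⟩
  obtain ⟨a0, b0, h0, ha0, hb0, p0, hA0, hB0⟩ := key 0
  obtain ⟨a1, b1, h1, ha1, hb1, p1, hA1, hB1⟩ := key 1
  obtain ⟨a2, b2, h2, ha2, hb2, p2, hA2, hB2⟩ := key 2
  have l01 : e 0 < e 1 := e.strictMono (by decide)
  have l12 : e 1 < e 2 := e.strictMono (by decide)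
  have m1 : b0 ≤ a1 := max_index_mono g p0 l01 hb0 (hB0 _) (hA1 _)
  have m2 : b1 ≤ a2 := max_index_mono g p1 l12 hb1 (hB1 _) (hA2 _)
  have hsub : ({a0, b0, b1, b2} : Finset ℕ) ⊆ g.support := by
    intro k hk
    simp only [Finset.mem_insert, Finset.mem_singleton] at hk
    rw [mem_support_iff]
    rcases hk with rfl | rfl | rfl | rfl <;> assumption
  have hc : ({a0, b0, b1, b2} : Finset ℕ).card = 4 := by
    rw [Finset.card_insert_of_notMem, Finset.card_insert_of_notMem,
      Finset.card_insert_of_notMem, Finset.card_singleton]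
    all_goals simp only [Finset.mem_insert, Finset.mem_singleton]; omega
  have := Finset.card_le_card hsub
  omega

/-- Number of roots in a disc versus the Newton polygon. -/
lemma exists_index_ge (r : ℝ) (hr : 0 < r) (S : Finset L) :
    ∀ g : L[X], g ≠ 0 → (∀ x ∈ S, ‖x‖ ≤ r ∧ g.eval x = 0) →
    ∃ i, S.card ≤ i ∧ (∀ k, ‖g.coeff k‖ * r ^ k ≤ ‖g.coeff i‖ * r ^ i) ∧
      (∀ k, i < k → ‖g.coeff k‖ * r ^ k < ‖g.coeff i‖ * r ^ i) := by
  classical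
  induction S using Finset.induction_on with
  | empty =>
    intro g hg _
    obtain ⟨j, hj, hmax⟩ := Finset.exists_max_image g.support
      (fun k => ‖g.coeff k‖ * r ^ k) (by simpa using hg)
    have hj0 : 0 < ‖g.coeff j‖ := norm_pos_iff.mpr (mem_support_iff.mp hj)
    have hmax' : ∀ k, ‖g.coeff k‖ * r ^ k ≤ ‖g.coeff j‖ * r ^ j := by
      intro k
      by_cases hk : k ∈ g.support
      · exact hmax k hk
      · rw [notMem_support_iff.mp hk]
        simp only [norm_zero, zero_mul]
        positivity
    let T := g.support.filter (fun k => ‖g.coeff j‖ * r ^ j ≤ ‖g.coeff k‖ * r ^ k)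
    have hT : T.Nonempty := ⟨j, by simp [T, hj]⟩
    have hm := T.max'_mem hT
    have hm2 := (Finset.mem_filter.mp hm).2
    refine ⟨T.max' hT, by simp, fun k => (hmax' k).trans hm2, fun k hk => ?_⟩
    by_contra hcon
    push Not at hcon
    have hle := hm2.trans hcon
    have hkT : k ∈ T := by
      refine Finset.mem_filter.mpr ⟨?_, hle⟩
      rw [mem_support_iff]
      intro h0
      rw [h0] at hle
      simp only [norm_zero, zero_mul] at hle
      have : 0 < ‖g.coeff j‖ * r ^ j := by positivity
      linarith
    have := T.le_max' k hkT
    omega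
  | insert a S ha ih =>
    intro g hg hS
    obtain ⟨h, rfl⟩ : (X - C a) ∣ g := dvd_iff_isRoot.mpr (hS a (Finset.mem_insert_self _ _)).2
    have hh : h ≠ 0 := right_ne_zero_of_mul hg
    have hSh : ∀ x ∈ S, ‖x‖ ≤ r ∧ h.eval x = 0 := by
      intro x hx
      obtain ⟨h1, h2⟩ := hS x (Finset.mem_insert_of_mem hx)
      refine ⟨h1, ?_⟩
      rw [eval_mul] at h2
      rcases mul_eq_zero.mp h2 with h3 | h3
      · simp only [eval_sub, eval_X, eval_C] at h3
        rw [sub_eq_zero] at h3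
        exact absurd (h3 ▸ hx) ha
      · exact h3
    obtain ⟨i, hi, hle, hlt⟩ := ih h hh hSh
    have har : ‖a‖ ≤ r := (hS a (Finset.mem_insert_self _ _)).1
    set M := ‖h.coeff i‖ * r ^ i with hM
    have hcoeff : ∀ k, ((X - C a) * h).coeff (k + 1) = h.coeff k - a * h.coeff (k + 1) := by
      intro k
      rw [sub_mul, coeff_sub, coeff_X_mul, coeff_C_mul]
    have hmul : ∀ k, ‖a * h.coeff k‖ * r ^ k ≤ r * (‖h.coeff k‖ * r ^ k) := by
      intro k
      rw [norm_mul]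
      have : 0 ≤ ‖h.coeff k‖ * r ^ k := by positivity
      nlinarith
    have hmain : ‖((X - C a) * h).coeff (i + 1)‖ * r ^ (i + 1) = r * M := by
      rw [hcoeff]
      have hl : ‖a * h.coeff (i + 1)‖ < ‖h.coeff i‖ := by
        have h1 := hmul (i + 1)
        have h2 := hlt (i + 1) (by omega)
        have h3 : ‖a * h.coeff (i + 1)‖ * r ^ (i + 1) < ‖h.coeff i‖ * r ^ (i + 1) := by
          calc _ ≤ _ := h1
            _ < r * M := by gcongr
            _ = _ := by rw [hM]; ring
        exact lt_of_mul_lt_mul_right h3 (by positivity)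
      rw [sub_eq_add_neg, IsUltrametricDist.norm_add_eq_max_of_norm_ne_norm
        (by rw [norm_neg]; exact hl.ne'), norm_neg, max_eq_left hl.le, hM]
      ring
    have hnorm : ∀ k, ‖((X - C a) * h).coeff (k + 1)‖ * r ^ (k + 1) ≤
        max (r * (‖h.coeff k‖ * r ^ k)) (r * (‖h.coeff (k+1)‖ * r ^ (k+1))) := by
      intro k
      rw [hcoeff]
      rcases le_max_iff.mp (ultra_sub (h.coeff k) (a * h.coeff (k+1))) with
        h1 | h1
      · refine le_max_of_le_left ?_
        calc _ ≤ ‖h.coeff k‖ * r ^ (k + 1) := by gcongr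
          _ = _ := by ring
      · refine le_max_of_le_right ?_
        calc _ ≤ ‖a * h.coeff (k + 1)‖ * r ^ (k + 1) := by gcongr
          _ ≤ _ := hmul _
    refine ⟨i + 1, by rw [Finset.card_insert_of_notMem ha]; omega, ?_, ?_⟩
    · intro k
      rw [hmain]
      rcases k with _ | k
      · have : ((X - C a) * h).coeff 0 = - (a * h.coeff 0) := by
          rw [sub_mul, coeff_sub, coeff_C_mul]; simp
        rw [this, norm_neg]
        exact (hmul 0).trans (by have := hle 0; gcongr)
      · refine (hnorm k).trans (max_le ?_ ?_)
        · have := hle k; gcongr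
        · have := hle (k+1); gcongr
    · intro k hk
      rw [hmain]
      obtain ⟨k, rfl⟩ : ∃ l, k = l + 1 := ⟨k - 1, by omega⟩
      refine (hnorm k).trans_lt (max_lt ?_ ?_)
      · have := hlt k (by omega); gcongr
      · have := hlt (k+1) (by omega); gcongr

end Ultra

section Padic

variable {p : ℕ} [hp : Fact p.Prime] {L : Type*} [NormedField L] [NormedAlgebra ℚ_[p] L]
  [IsUltrametricDist L] [FiniteDimensional ℚ_[p] L]

set_option linter.unusedSectionVars false
set_option linter.style.haveILetI false

variable (p) in
lemma padic_norm_pow_le (x : L) (hx : ‖x‖ < 1) : ‖x‖ ^ (Module.finrank ℚ_[p] L) ≤ 1 / (p : ℝ) := by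
  have hp1 : (1 : ℝ) < p := by exact_mod_cast hp.out.one_lt
  set d := Module.finrank ℚ_[p] L with hd
  have hdpos : 0 < d := Module.finrank_pos
  by_cases hx0 : x = 0
  · subst hx0
    rw [norm_zero, zero_pow hdpos.ne']
    positivity
  have hinteg : IsIntegral ℚ_[p] x := Algebra.IsIntegral.isIntegral x
  set g := (minpoly ℚ_[p] x).map (algebraMap ℚ_[p] L) with hg
  have hg0 : g ≠ 0 := (Polynomial.map_ne_zero_iff (algebraMap ℚ_[p] L).injective).mpr
    (minpoly.ne_zero hinteg)
  have hev : g.eval x = 0 := by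
    rw [hg, eval_map_algebraMap]
    exact minpoly.aeval _ _
  obtain ⟨i, j, hij, hi0, hj0, hi, hj⟩ := two_max g hg0 x hx0 hev
  have heq : ‖g.coeff i‖ * ‖x‖ ^ i = ‖g.coeff j‖ * ‖x‖ ^ j := le_antisymm (hj i) (hi j)
  have hjd : j ≤ d := by
    have h1 : j ≤ g.natDegree := le_natDegree_of_ne_zero hj0
    have h2 : g.natDegree = (minpoly ℚ_[p] x).natDegree := natDegree_map _
    have h3 := minpoly.natDegree_le (A := ℚ_[p]) x
    omega
  have hnorm : ∀ k, g.coeff k ≠ 0 → ∃ z : ℤ, ‖g.coeff k‖ = (p : ℝ) ^ z := by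
    intro k hk
    rw [hg, coeff_map, norm_algebraMap']
    rw [hg, coeff_map] at hk
    exact ⟨_, Padic.norm_eq_zpow_neg_valuation (fun h => hk (by rw [h, map_zero]))⟩
  obtain ⟨zi, hzi⟩ := hnorm i hi0
  obtain ⟨zj, hzj⟩ := hnorm j hj0
  have hxpos : 0 < ‖x‖ := norm_pos_iff.mpr hx0
  obtain ⟨k, rfl⟩ := Nat.exists_eq_add_of_lt hij
  have hpp : (0 : ℝ) < p := by linarith
  have hρ : ‖x‖ ^ (k + 1) = (p : ℝ) ^ (zi - zj) := by
    rw [hzi, hzj] at heq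
    rw [zpow_sub₀ hpp.ne', eq_div_iff (by positivity)]
    have : (p : ℝ) ^ zi * ‖x‖ ^ i = (‖x‖ ^ (k + 1) * (p : ℝ) ^ zj) * ‖x‖ ^ i := by
      rw [heq]; ring
    exact (mul_right_cancel₀ (by positivity) this).symm
  have hlt : (p : ℝ) ^ (zi - zj) < (p : ℝ) ^ (0 : ℤ) := by
    rw [← hρ, zpow_zero]
    exact pow_lt_one₀ hxpos.le hx (by omega)
  have hz : zi - zj ≤ -1 := by
    have := (zpow_lt_zpow_iff_right₀ hp1).mp hlt
    omega
  calc ‖x‖ ^ d ≤ ‖x‖ ^ (k + 1) := pow_le_pow_of_le_one hxpos.le hx.le (by omega)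
    _ = (p : ℝ) ^ (zi - zj) := hρ
    _ ≤ (p : ℝ) ^ (-1 : ℤ) := zpow_le_zpow_right₀ hp1.le hz
    _ = 1 / p := by rw [zpow_neg_one, one_div]

lemma norm_nat_ge (p : ℕ) [hp : Fact p.Prime] {L : Type*} [NormedField L] [NormedAlgebra ℚ_[p] L]
    (n : ℕ) (hn : 0 < n) : 1 ≤ (n : ℝ) * ‖(n : L)‖ := by
  have h1 : ‖(n : L)‖ = ‖(n : ℚ_[p])‖ := by
    rw [← norm_algebraMap' L (n : ℚ_[p]), map_natCast]
  have hp1 : (1 : ℝ) < p := by exact_mod_cast hp.out.one_lt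
  rw [h1, Padic.norm_eq_zpow_neg_valuation (by exact_mod_cast hn.ne'), Padic.valuation_natCast]
  rw [zpow_neg, zpow_natCast, ← div_eq_mul_inv, le_div_iff₀ (by positivity), one_mul]
  exact_mod_cast Nat.le_of_dvd hn pow_padicValNat_dvd

lemma norm_nat_le (p : ℕ) [hp : Fact p.Prime] {L : Type*} [NormedField L] [NormedAlgebra ℚ_[p] L]
    (n : ℕ) : ‖(n : L)‖ ≤ 1 := by
  rw [← map_natCast (algebraMap ℚ_[p] L), norm_algebraMap']
  exact_mod_cast Padic.norm_int_le_one (n : ℤ)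

variable (p) in
lemma card_le_pow (T : Finset L) (h1 : ∀ x ∈ T, ‖x‖ ≤ 1)
    (h2 : ∀ x ∈ T, ∀ y ∈ T, x ≠ y → 1 ≤ ‖x - y‖) :
    T.card ≤ p ^ (Module.finrank ℚ_[p] L) := by
  classical
  have hp1 : 1 < p := hp.out.one_lt
  letI : Algebra ℤ_[p] L := ((algebraMap ℚ_[p] L).comp (algebraMap ℤ_[p] ℚ_[p])).toAlgebra
  haveI : IsScalarTower ℤ_[p] ℚ_[p] L := IsScalarTower.of_algebraMap_eq (fun _ => rfl)
  have hsmul : ∀ (a : ℤ_[p]) (x : L), ‖a • x‖ = ‖a‖ * ‖x‖ := by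
    intro a x
    rw [Algebra.smul_def, norm_mul]
    congr 1
    exact norm_algebraMap' L _
  haveI : Module.IsTorsionFree ℤ_[p] L := by
    rw [Module.isTorsionFree_iff_algebraMap_injective]
    exact (algebraMap ℚ_[p] L).injective.comp (IsFractionRing.injective ℤ_[p] ℚ_[p])
  let M : Submodule ℤ_[p] L := Submodule.span ℤ_[p] (T : Set L)
  haveI : Module.Finite ℤ_[p] M := Module.Finite.span_of_finite _ T.finite_toSet
  haveI : Module.Free ℤ_[p] M := Module.free_of_finite_type_torsion_free'
  let b := Module.finBasis ℤ_[p] M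
  set r := Module.finrank ℤ_[p] M with hr
  have hM : ∀ x ∈ M, ‖x‖ ≤ 1 := by
    intro x hx
    induction hx using Submodule.span_induction with
    | mem x hx => exact h1 x hx
    | zero => simp
    | add x y _ _ hx hy => exact (IsUltrametricDist.norm_add_le_max x y).trans (max_le hx hy)
    | smul a x _ hx => rw [hsmul]; exact mul_le_one₀ a.norm_le_one (norm_nonneg _) hx
  have hrd : r ≤ Module.finrank ℚ_[p] L := by
    have li : LinearIndependent ℤ_[p] (fun i => (b i : L)) :=
      b.linearIndependent.map' M.subtype (Submodule.ker_subtype M)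
    have li' := (LinearIndependent.iff_fractionRing ℤ_[p] ℚ_[p]).mp li
    simpa using li'.fintype_card_le_finrank
  let F : L → (Fin r → ZMod p) := fun x =>
    if hx : x ∈ M then fun i => PadicInt.toZMod (b.repr ⟨x, hx⟩ i) else 0
  have hinj : Set.InjOn F T := by
    intro x hx y hy hxy
    by_contra hne
    have hxM : x ∈ M := Submodule.subset_span hx
    have hyM : y ∈ M := Submodule.subset_span hy
    have hlt : ‖x - y‖ < 1 := by
      have e : x - y = ∑ i, (b.repr ⟨x, hxM⟩ i - b.repr ⟨y, hyM⟩ i) • (b i : L) := by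
        have ex := congrArg (Subtype.val) (b.sum_repr ⟨x, hxM⟩)
        have ey := congrArg (Subtype.val) (b.sum_repr ⟨y, hyM⟩)
        simp only [Submodule.coe_sum, Submodule.coe_smul] at ex ey
        simp only [sub_smul, Finset.sum_sub_distrib]
        rw [ex, ey]
      rw [e]
      have hall : ∀ i, ‖(b.repr ⟨x, hxM⟩ i - b.repr ⟨y, hyM⟩ i) • (b i : L)‖ < 1 := by
        intro i
        rw [hsmul]
        have hi := congrFun hxy i
        simp only [F, hxM, hyM, dif_pos] at hi
        have hk : b.repr ⟨x, hxM⟩ i - b.repr ⟨y, hyM⟩ i ∈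
            RingHom.ker (PadicInt.toZMod : ℤ_[p] →+* ZMod p) := by
          rw [RingHom.mem_ker, map_sub, hi, sub_self]
        rw [PadicInt.ker_toZMod, IsLocalRing.mem_maximalIdeal, PadicInt.mem_nonunits] at hk
        calc _ ≤ _ * 1 := mul_le_mul_of_nonneg_left (hM _ (b i).2) (norm_nonneg _)
          _ < 1 := by rwa [mul_one]
      by_cases hr0 : (Finset.univ : Finset (Fin r)).Nonempty
      · obtain ⟨i, _, hi⟩ := IsUltrametricDist.exists_norm_finsetSum_le_of_nonempty hr0
          (fun i => (b.repr ⟨x, hxM⟩ i - b.repr ⟨y, hyM⟩ i) • (b i : L))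
        exact hi.trans_lt (hall i)
      · rw [Finset.not_nonempty_iff_eq_empty] at hr0
        rw [hr0]; simp
    exact absurd (h2 x hx y hy hne) (not_le.mpr hlt)
  have : T.card ≤ (Finset.univ : Finset (Fin r → ZMod p)).card :=
    Finset.card_le_card_of_injOn F (fun _ _ => Finset.mem_univ _) hinj
  rw [Finset.card_univ, Fintype.card_fun, ZMod.card, Fintype.card_fin] at this
  exact this.trans (Nat.pow_le_pow_right (by omega) hrd)

variable (p) in
/-- Counting by residue classes. -/
lemma card_le_of_classes (S : Finset L) (ρ : ℝ) (hρ : 0 < ρ) (hS : ∀ x ∈ S, ‖x‖ = ρ) (B : ℕ)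
    (hB : ∀ x ∈ S, ∀ S' ⊆ S, (∀ y ∈ S', ‖y - x‖ < ρ) → S'.card ≤ B) :
    S.card ≤ (p ^ (Module.finrank ℚ_[p] L) - 1) * B := by
  classical
  let P := S.powerset.filter (fun T => ∀ x ∈ T, ∀ y ∈ T, x ≠ y → ρ ≤ ‖x - y‖)
  have hP : P.Nonempty := ⟨∅, by simp [P]⟩
  obtain ⟨T, hT, hmax⟩ := Finset.exists_max_image P Finset.card hP
  obtain ⟨hTS, hTp⟩ := Finset.mem_filter.mp hT
  rw [Finset.mem_powerset] at hTS
  have hTc : T.card ≤ p ^ (Module.finrank ℚ_[p] L) - 1 := by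
    rcases T.eq_empty_or_nonempty with rfl | ⟨x0, hx0⟩
    · simp
    have hx0ρ := hS x0 (hTS hx0)
    have hx00 : x0 ≠ 0 := norm_pos_iff.mp (hx0ρ ▸ hρ)
    have hinj : Function.Injective (fun x : L => x / x0) := fun a b h => (div_left_inj' hx00).mp h
    have h0 : (0 : L) ∉ T.image (fun x => x / x0) := by
      intro h
      obtain ⟨y, hy, hy0⟩ := Finset.mem_image.mp h
      have : y = 0 := by
        rcases div_eq_zero_iff.mp hy0 with h | h
        · exact h
        · exact absurd h hx00
      have hyρ := hS y (hTS hy)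
      rw [this, norm_zero] at hyρ
      exact hρ.ne hyρ
    have hn1 : ∀ y ∈ T.image (fun x => x / x0), ‖y‖ = 1 := by
      intro y hy
      obtain ⟨x, hx, rfl⟩ := Finset.mem_image.mp hy
      rw [norm_div, hS x (hTS hx), hx0ρ, div_self hρ.ne']
    have := card_le_pow p (insert 0 (T.image (fun x => x / x0))) (by
      intro x hx
      rcases Finset.mem_insert.mp hx with rfl | hx
      · simp
      · exact (hn1 x hx).le) (by
      intro x hx y hy hxy
      rcases Finset.mem_insert.mp hx with rfl | hx' <;>
        rcases Finset.mem_insert.mp hy with rfl | hy'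
      · exact absurd rfl hxy
      · rw [zero_sub, norm_neg, hn1 y hy']
      · rw [sub_zero, hn1 x hx']
      · obtain ⟨x, hx2, rfl⟩ := Finset.mem_image.mp hx'
        obtain ⟨y, hy2, rfl⟩ := Finset.mem_image.mp hy'
        have := hTp x hx2 y hy2 (fun h => hxy (by rw [h]))
        rw [← sub_div, norm_div, hx0ρ, le_div_iff₀ hρ, one_mul]
        exact this)
    rw [Finset.card_insert_of_notMem h0, Finset.card_image_of_injective _ hinj] at this
    omega
  have hcov : S ⊆ T.biUnion (fun x => S.filter (fun y => ‖y - x‖ < ρ)) := by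
    intro y hy
    by_contra hcon
    simp only [Finset.mem_biUnion, Finset.mem_filter, not_exists, not_and, not_lt] at hcon
    have hyT : y ∉ T := by
      intro h
      have := hcon y h hy
      rw [sub_self, norm_zero] at this
      linarith
    have hmem : insert y T ∈ P := by
      refine Finset.mem_filter.mpr ⟨?_, ?_⟩
      · rw [Finset.mem_powerset]
        exact Finset.insert_subset hy hTS
      · intro a ha b hb hab
        rcases Finset.mem_insert.mp ha with rfl | ha' <;>
          rcases Finset.mem_insert.mp hb with rfl | hb'
        · exact absurd rfl hab
        · exact hcon b hb' hy
        · rw [norm_sub_rev]; exact hcon a ha' hy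
        · exact hTp a ha' b hb' hab
    have := hmax _ hmem
    rw [Finset.card_insert_of_notMem hyT] at this
    omega
  calc S.card ≤ _ := Finset.card_le_card hcov
    _ ≤ T.card * B := Finset.card_biUnion_le_card_mul _ _ _ (fun x hx =>
        hB x (hTS hx) _ (Finset.filter_subset _ _) (fun y hy => (Finset.mem_filter.mp hy).2))
    _ ≤ _ := Nat.mul_le_mul_right _ hTc

end Padic

noncomputable def discBound (p d : ℕ) : ℝ :=
  2 * (Real.exp 1 / (Real.exp 1 - 1)) * (1 + d * logb p (2 * d / Real.log p))

lemma le_discBound (p d : ℕ) (hp : 1 < p) (hd : 0 < d) (x : ℝ) (hx : 1 ≤ x)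
    (h : (x - 2) * Real.log p ≤ 2 * d * Real.log x) : x ≤ discBound p d := by
  have hu : 0 < Real.log p := Real.log_pos (by exact_mod_cast hp)
  have hd' : (0 : ℝ) < d := by exact_mod_cast hd
  have hE : 1 < Real.exp 1 := Real.one_lt_exp_iff.mpr one_pos
  unfold discBound
  rw [logb]
  set u := Real.log p
  set E := Real.exp 1 with hEdef
  set w := 2 * (d : ℝ) / u with hw
  have hwpos : 0 < w := by positivity
  have h1 : Real.log x ≤ Real.log w + x / (E * w) := by
    have := Real.log_le_sub_one_of_pos (x := x / (E * w)) (by positivity)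
    rw [Real.log_div (by positivity) (by positivity), Real.log_mul (by positivity) (by positivity),
      hEdef, Real.log_exp] at this
    linarith
  have h2 : x - 2 ≤ w * Real.log x := by
    rw [hw, div_mul_eq_mul_div, le_div_iff₀ hu]
    exact h
  have h3 : x - 2 ≤ w * Real.log w + x / E := by
    calc x - 2 ≤ w * Real.log x := h2
      _ ≤ w * (Real.log w + x / (E * w)) := by gcongr
      _ = _ := by field_simp
  have h4 : x * (E - 1) ≤ E * (2 + w * Real.log w) := by
    have : x / E * E = x := by field_simp
    nlinarith
  have h5 : 2 * (E / (E - 1)) * (1 + d * (Real.log w / u)) =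
      E * (2 + w * Real.log w) / (E - 1) := by
    have : E - 1 ≠ 0 := by linarith
    rw [hw]
    field_simp
  rw [h5, le_div_iff₀ (by linarith)]
  exact h4

section Padic2

variable {p : ℕ} [hp : Fact p.Prime] {L : Type*} [NormedField L] [NormedAlgebra ℚ_[p] L]
  [IsUltrametricDist L] [FiniteDimensional ℚ_[p] L]

set_option linter.unusedSectionVars false
set_option linter.style.haveILetI false

variable (p) in
lemma unity_card (n : ℕ) (hn : 0 < n) (S : Finset L) (hS : ∀ x ∈ S, x ^ n = 1 ∧ ‖x - 1‖ < 1) :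
    S.card * (p - 1) ≤ Module.finrank ℚ_[p] L * p := by
  classical
  set d := Module.finrank ℚ_[p] L with hd
  have hdpos : 0 < d := Module.finrank_pos
  have hp1 : 1 < p := hp.out.one_lt
  have hp1' : (1 : ℝ) < p := by exact_mod_cast hp1
  have hnorm1 : ∀ u : L, u ^ n = 1 → ‖u‖ = 1 := by
    intro u hu
    have : ‖u‖ ^ n = 1 := by rw [← norm_pow, hu, norm_one]
    exact (pow_eq_one_iff_of_nonneg (norm_nonneg _) hn.ne').mp this
  let G : Subgroup Lˣ :=
    { carrier := {u | (u : L) ^ n = 1 ∧ ‖(u : L) - 1‖ < 1}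
      one_mem' := by simp
      mul_mem' := by
        rintro u v ⟨hu, hu'⟩ ⟨hv, hv'⟩
        refine ⟨by rw [Units.val_mul, mul_pow, hu, hv, one_mul], ?_⟩
        have e : ((u * v : Lˣ) : L) - 1 = u * (v - 1) + (u - 1) := by rw [Units.val_mul]; ring
        rw [e]
        refine (IsUltrametricDist.norm_add_le_max _ _).trans_lt (max_lt ?_ hu')
        rw [norm_mul, hnorm1 _ hu, one_mul]
        exact hv'
      inv_mem' := by
        rintro u ⟨hu, hu'⟩
        refine ⟨by rw [Units.val_inv_eq_inv_val, inv_pow, hu, inv_one], ?_⟩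
        have e : ((u⁻¹ : Lˣ) : L) - 1 = - ((u : L)⁻¹ * (u - 1)) := by
          rw [Units.val_inv_eq_inv_val, mul_sub, inv_mul_cancel₀ u.ne_zero]; ring
        rw [e, norm_neg, norm_mul, norm_inv, hnorm1 _ hu, inv_one, one_mul]
        exact hu' }
  haveI : NeZero n := ⟨hn.ne'⟩
  haveI : Finite G := by
    have hle : G ≤ rootsOfUnity n L := by
      rintro u ⟨hu, _⟩
      rw [mem_rootsOfUnity']
      exact hu
    exact Finite.of_injective (Subgroup.inclusion hle) (Subgroup.inclusion_injective hle)
  obtain ⟨ζ, hζ⟩ := IsCyclic.exists_generator (α := G)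
  set N := Nat.card G with hN
  have hord : orderOf ζ = N := orderOf_eq_card_of_forall_mem_zpowers hζ
  have hNpos : 0 < N := Nat.card_pos
  have hprim : IsPrimitiveRoot ((ζ : Lˣ) : L) N := by
    rw [← hord, ← Subgroup.orderOf_coe ζ, ← orderOf_units]
    exact IsPrimitiveRoot.orderOf _
  have hSN : S.card ≤ N := by
    let F : L → L := id
    have hsub : S ⊆ (Set.Finite.toFinset (Set.finite_range (fun g : G => ((g : Lˣ) : L)))) := by
      intro x hx
      rw [Set.Finite.mem_toFinset]
      obtain ⟨h1, h2⟩ := hS x hx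
      have hx0 : x ≠ 0 := by
        rintro rfl
        rw [zero_pow hn.ne'] at h1
        exact zero_ne_one h1
      exact ⟨⟨Units.mk0 x hx0, h1, h2⟩, rfl⟩
    refine (Finset.card_le_card hsub).trans ?_
    rw [← Set.ncard_eq_toFinset_card _, ← Nat.card_coe_set_eq]
    exact Finite.card_range_le _
  refine (Nat.mul_le_mul_right _ hSN).trans ?_
  rcases Nat.eq_or_lt_of_le (Nat.succ_le_of_lt hNpos) with h1 | h1
  · rw [← h1]
    calc (0 + 1) * (p - 1) ≤ 1 * p := by omega
      _ ≤ d * p := Nat.mul_le_mul_right _ hdpos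
  have hev : ‖(cyclotomic N L).eval 1‖ ^ d ≤ (1 / (p : ℝ)) ^ N.totient := by
    rw [cyclotomic_eq_prod_X_sub_primitiveRoots hprim, eval_prod, norm_prod, ← Finset.prod_pow,
      ← hprim.card_primitiveRoots]
    rw [← Finset.prod_const]
    refine Finset.prod_le_prod (fun _ _ => by positivity) ?_
    intro μ hμ
    rw [mem_primitiveRoots hNpos] at hμ
    obtain ⟨i, hi, rfl⟩ := hprim.eq_pow_of_pow_eq_one hμ.pow_eq_one
    simp only [eval_sub, eval_X, eval_C]
    refine padic_norm_pow_le p _ ?_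
    rw [norm_sub_rev]
    exact (ζ ^ i).2.2
  have htot : 0 < N.totient := Nat.totient_pos.mpr hNpos
  have hinv : 1 / (p : ℝ) < 1 := by rw [div_lt_one (by linarith)]; exact hp1'
  have hlt1 : ‖(cyclotomic N L).eval 1‖ ≠ 1 := by
    intro h
    rw [h, one_pow] at hev
    have := pow_lt_one₀ (by positivity) hinv htot.ne'
    linarith
  by_cases hpp : ∃ q : ℕ, q.Prime ∧ ∃ k, q ^ k = N
  · obtain ⟨q, hq, k, hk⟩ := hpp
    obtain ⟨k, rfl⟩ : ∃ l, k = l + 1 := by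
      refine ⟨k - 1, ?_⟩
      rcases k with _ | k
      · simp at hk; omega
      · rfl
    haveI : Fact q.Prime := ⟨hq⟩
    rw [← hk, eval_one_cyclotomic_prime_pow] at hlt1 hev
    have hnq : ‖(q : L)‖ = ‖(q : ℚ_[p])‖ := by
      rw [← norm_algebraMap' L (q : ℚ_[p]), map_natCast]
    by_cases hqp : q = p
    · subst hqp
      rw [hnq, Padic.norm_p, ← one_div] at hev
      have hφ : (q ^ (k + 1)).totient ≤ d := by
        by_contra hcon
        push Not at hcon
        have := pow_lt_pow_right_of_lt_one₀ (by positivity) hinv hcon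
        linarith
      rw [Nat.totient_prime_pow_succ hq] at hφ
      rw [← hk]
      calc q ^ (k + 1) * (q - 1) = (q ^ k * (q - 1)) * q := by ring
        _ ≤ d * q := Nat.mul_le_mul_right _ hφ
    · exfalso
      apply hlt1
      rw [hnq, Padic.norm_natCast_eq_one_iff]
      exact (Nat.coprime_primes hp.out hq).mpr (Ne.symm hqp)
  · exfalso
    apply hlt1
    rw [eval_one_cyclotomic_not_prime_pow, norm_one]
    intro q hq k hk
    exact hpp ⟨q, hq, k, hk⟩

variable (p) in
lemma roots_pow_card (n : ℕ) (hn : 0 < n) (κ : L) (S : Finset L)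
    (hS : ∀ x ∈ S, x ≠ 0 ∧ x ^ n = κ) :
    (S.card : ℝ) ≤ (Module.finrank ℚ_[p] L * p * ((p : ℝ) ^ (Module.finrank ℚ_[p] L) - 1)) /
      ((p : ℝ) - 1) := by
  classical
  set d := Module.finrank ℚ_[p] L with hd
  have hp1 : 1 < p := hp.out.one_lt
  have hp1' : (1 : ℝ) < p := by exact_mod_cast hp1
  have hpd : (1 : ℝ) ≤ (p : ℝ) ^ d := one_le_pow₀ hp1'.le
  rcases S.eq_empty_or_nonempty with rfl | ⟨x0, hx0⟩
  · simp only [Finset.card_empty, Nat.cast_zero]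
    have : 0 ≤ (p : ℝ) ^ d - 1 := by linarith
    have : 0 ≤ (p : ℝ) - 1 := by linarith
    positivity
  have h := card_le_of_classes p S ‖x0‖ (norm_pos_iff.mpr (hS x0 hx0).1) (by
      intro x hx
      have : ‖x‖ ^ n = ‖x0‖ ^ n := by
        rw [← norm_pow, ← norm_pow, (hS x hx).2, (hS x0 hx0).2]
      exact (pow_left_inj₀ (norm_nonneg _) (norm_nonneg _) hn.ne').mp this) (d * p / (p - 1)) (by
      intro x hx S' hS' hnear
      have hx0' := (hS x hx).1
      have hxn : ‖x‖ = ‖x0‖ := by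
        have : ‖x‖ ^ n = ‖x0‖ ^ n := by
          rw [← norm_pow, ← norm_pow, (hS x hx).2, (hS x0 hx0).2]
        exact (pow_left_inj₀ (norm_nonneg _) (norm_nonneg _) hn.ne').mp this
      have hinj : Function.Injective (fun y : L => y / x) := fun a b h =>
        (div_left_inj' hx0').mp h
      rw [Nat.le_div_iff_mul_le (by omega), ← Finset.card_image_of_injective S' hinj]
      refine unity_card p n hn _ ?_
      intro z hz
      obtain ⟨y, hy, rfl⟩ := Finset.mem_image.mp hz
      refine ⟨?_, ?_⟩
      · rw [div_pow, (hS y (hS' hy)).2, (hS x hx).2, div_self]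
        rw [← (hS x hx).2]
        exact pow_ne_zero _ hx0'
      · have e : y / x - 1 = (y - x) / x := by field_simp
        rw [e, norm_div, div_lt_one (norm_pos_iff.mpr hx0'), hxn]
        exact hnear y hy)
  have h' : (S.card : ℝ) ≤ ((p : ℝ) ^ d - 1) * ((d * p / (p - 1) : ℕ) : ℝ) := by
    have := (Nat.cast_le (α := ℝ)).mpr h
    rw [Nat.cast_mul, Nat.cast_sub (Nat.one_le_pow _ _ (by omega))] at this
    simpa using this
  refine h'.trans ?_
  have h2 : ((d * p / (p - 1) : ℕ) : ℝ) ≤ (d * p) / ((p : ℝ) - 1) := by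
    have := Nat.cast_div_le (α := ℝ) (m := d * p) (n := p - 1)
    rw [Nat.cast_sub hp1.le] at this
    simpa using this
  calc _ ≤ ((p : ℝ) ^ d - 1) * ((d * p) / ((p : ℝ) - 1)) :=
        mul_le_mul_of_nonneg_left h2 (by linarith)
    _ = _ := by ring

lemma tri_coeff_bound (p : ℕ) [hp : Fact p.Prime] {L : Type*} [NormedField L]
    [NormedAlgebra ℚ_[p] L] [IsUltrametricDist L] (G : ℕ → L) (b c : L) (m N : ℕ)
    (hG : ∀ i, 1 ≤ i → G i = b * ((m + 1).choose i : L) + c * ((m + 1 + N).choose i : L))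
    (i : ℕ) (hi : 1 ≤ i) :
    ‖G (i + 1)‖ ≤ ((i : ℝ) + 1) * i * max ‖G 1‖ ‖G 2‖ := by
  have hmul : ∀ i, ((i + 1 : ℕ) : L) * G (i + 1) =
      b * (m + 1) * (m.choose i : L) + c * (m + 1 + N) * ((m + N).choose i : L) := by
    intro i
    rw [hG (i + 1) (by omega)]
    have e1 : (((i + 1 : ℕ) : L) * ((m + 1).choose (i + 1) : L)) =
        ((m : L) + 1) * (m.choose i : L) := by
      have := Nat.add_one_mul_choose_eq m i
      have := congrArg (Nat.cast (R := L)) this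
      push_cast at this ⊢
      rw [this]; ring
    have e2 : (((i + 1 : ℕ) : L) * ((m + 1 + N).choose (i + 1) : L)) =
        ((m : L) + 1 + N) * ((m + N).choose i : L) := by
      have := Nat.add_one_mul_choose_eq (m + N) i
      have := congrArg (Nat.cast (R := L)) this
      rw [show m + 1 + N = m + N + 1 by ring]
      push_cast at this ⊢
      rw [show (m : L) + 1 + N = m + N + 1 by ring, this]; ring
    calc _ = b * (((i + 1 : ℕ) : L) * ((m + 1).choose (i + 1) : L)) +
          c * (((i + 1 : ℕ) : L) * ((m + 1 + N).choose (i + 1) : L)) := by ring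
      _ = _ := by rw [e1, e2]; ring
  set h0 : L := b * (m + 1) + c * (m + 1 + N) with hh0
  set K : L := c * (m + 1 + N) * N with hK
  set Q := max ‖G 1‖ ‖G 2‖ with hQ
  have hQ0 : 0 ≤ Q := le_max_of_le_left (norm_nonneg _)
  have hh0Q : ‖h0‖ ≤ Q := by
    have := hmul 0
    simp only [zero_add, Nat.cast_one, one_mul, Nat.choose_zero_right, mul_one] at this
    rw [hh0, ← this]
    exact le_max_left _ _
  have hKQ : ‖K‖ ≤ Q := by
    have := hmul 1
    simp only [Nat.choose_one_right] at this
    have e : K = ((1 + 1 : ℕ) : L) * G 2 - h0 * m := by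
      rw [this, hK, hh0]; push_cast; ring
    rw [e]
    refine (ultra_sub _ _).trans (max_le ?_ ?_)
    · rw [norm_mul]
      calc _ ≤ 1 * ‖G 2‖ := mul_le_mul_of_nonneg_right (norm_nat_le p _) (norm_nonneg _)
        _ ≤ Q := by rw [one_mul]; exact le_max_right _ _
    · rw [norm_mul]
      calc _ ≤ ‖h0‖ * 1 := mul_le_mul_of_nonneg_left (norm_nat_le p _) (norm_nonneg _)
        _ ≤ Q := by rw [mul_one]; exact hh0Q
  have hi' : (1 : ℝ) ≤ i := by exact_mod_cast hi
  have hsum : ((i + 1 : ℕ) : L) * G (i + 1) = ∑ kj ∈ Finset.HasAntidiagonal.antidiagonal i,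
      (m.choose kj.1 : L) * (b * (m + 1) * (Nat.choose 0 kj.2 : L)
        + c * (m + 1 + N) * (N.choose kj.2 : L)) := by
    have v1 := Nat.add_choose_eq m 0 i
    have v2 := Nat.add_choose_eq m N i
    rw [add_zero] at v1
    rw [hmul, v1, v2]
    push_cast
    rw [Finset.mul_sum, Finset.mul_sum, ← Finset.sum_add_distrib]
    refine Finset.sum_congr rfl (fun _ _ => by ring)
  have hterm : ∀ kj ∈ Finset.HasAntidiagonal.antidiagonal i, ‖(m.choose kj.1 : L) *
      (b * (m + 1) * (Nat.choose 0 kj.2 : L) + c * (m + 1 + N) * (N.choose kj.2 : L))‖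
        ≤ i * Q := by
    rintro ⟨k, j⟩ hkj
    rw [Finset.HasAntidiagonal.mem_antidiagonal] at hkj
    simp only at hkj ⊢
    rw [norm_mul]
    have hle : ∀ t : ℝ, 0 ≤ t → ‖(m.choose k : L)‖ * t ≤ t := fun t ht => by
      calc _ ≤ 1 * t := mul_le_mul_of_nonneg_right (norm_nat_le p _) ht
        _ = t := one_mul t
    refine (hle _ (norm_nonneg _)).trans ?_
    rcases j with _ | j
    · simp only [Nat.choose_zero_right, Nat.cast_one, mul_one]
      calc _ ≤ Q := hh0Q
        _ ≤ i * Q := by nlinarith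
    · rw [Nat.choose_zero_succ, Nat.cast_zero, mul_zero, zero_add]
      rcases N with _ | N
      · rw [Nat.choose_zero_succ, Nat.cast_zero, mul_zero, norm_zero]
        positivity
      have e : ((j + 1 : ℕ) : L) * (c * (m + 1 + ((N + 1 : ℕ) : L)) * ((N + 1).choose (j + 1) : L))
          = K * (N.choose j : L) := by
        have := Nat.add_one_mul_choose_eq N j
        have := congrArg (Nat.cast (R := L)) this
        rw [hK]
        push_cast at this ⊢
        linear_combination (-(c * (m + 1 + (N + 1)))) * this
      have hn1 : ((j + 1 : ℕ) : ℝ) ≤ i := by exact_mod_cast (by omega : j + 1 ≤ i)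
      have hge := norm_nat_ge p (L := L) (j + 1) (by omega)
      set A := c * (m + 1 + ((N + 1 : ℕ) : L)) * ((N + 1).choose (j + 1) : L)
      have e' : ‖((j + 1 : ℕ) : L)‖ * ‖A‖ ≤ Q := by
        rw [← norm_mul, e, norm_mul]
        calc _ ≤ ‖K‖ * 1 := mul_le_mul_of_nonneg_left (norm_nat_le p _) (norm_nonneg _)
          _ ≤ Q := by rw [mul_one]; exact hKQ
      calc ‖A‖ ≤ (((j + 1 : ℕ) : ℝ) * ‖((j + 1 : ℕ) : L)‖) * ‖A‖ :=
            le_mul_of_one_le_left (norm_nonneg _) hge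
        _ = ((j + 1 : ℕ) : ℝ) * (‖((j + 1 : ℕ) : L)‖ * ‖A‖) := by ring
        _ ≤ i * Q := by gcongr
  have hnorm : ‖((i + 1 : ℕ) : L) * G (i + 1)‖ ≤ i * Q := by
    rw [hsum]
    obtain ⟨kj, hkj, hle⟩ := IsUltrametricDist.exists_norm_finsetSum_le_of_nonempty
      (t := Finset.HasAntidiagonal.antidiagonal i) ⟨(0, i), by simp⟩
      (fun kj => (m.choose kj.1 : L) * (b * (m + 1) * (Nat.choose 0 kj.2 : L)
        + c * (m + 1 + N) * (N.choose kj.2 : L)))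
    exact hle.trans (hterm kj hkj)
  have hge := norm_nat_ge p (L := L) (i + 1) (by omega)
  rw [norm_mul] at hnorm
  calc ‖G (i + 1)‖ ≤ (((i + 1 : ℕ) : ℝ) * ‖((i + 1 : ℕ) : L)‖) * ‖G (i + 1)‖ :=
        le_mul_of_one_le_left (norm_nonneg _) hge
    _ = ((i + 1 : ℕ) : ℝ) * (‖((i + 1 : ℕ) : L)‖ * ‖G (i + 1)‖) := by ring
    _ ≤ ((i + 1 : ℕ) : ℝ) * (i * Q) := by gcongr
    _ = _ := by push_cast; ring

end Padic2

section Padic3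

variable {p : ℕ} [hp : Fact p.Prime] {L : Type*} [NormedField L] [NormedAlgebra ℚ_[p] L]
  [IsUltrametricDist L] [FiniteDimensional ℚ_[p] L]

set_option linter.unusedSectionVars false
set_option linter.style.haveILetI false

lemma one_le_discBound (p d : ℕ) (hp : 1 < p) (hd : 0 < d) : 1 ≤ discBound p d := by
  refine le_discBound p d hp hd 1 le_rfl ?_
  have hu : 0 < Real.log p := Real.log_pos (by exact_mod_cast hp)
  rw [Real.log_one]
  linarith

variable (p) in
lemma disc_count (a b c : L) (m N : ℕ)
    (hG : C a + C b * (1 + X) ^ (m + 1) + C c * (1 + X) ^ (m + 1 + N) ≠ 0) (S : Finset L)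
    (hS : ∀ z ∈ S, ‖z‖ < 1 ∧
      (C a + C b * (1 + X) ^ (m + 1) + C c * (1 + X) ^ (m + 1 + N)).eval z = 0) :
    (S.card : ℝ) ≤ discBound p (Module.finrank ℚ_[p] L) := by
  set d := Module.finrank ℚ_[p] L with hd
  have hdpos : 0 < d := Module.finrank_pos
  have hp1 : 1 < p := hp.out.one_lt
  have hp1' : (1 : ℝ) < p := by exact_mod_cast hp1
  have hlogp : 0 < Real.log p := Real.log_pos hp1'
  have hd' : (0 : ℝ) < d := by exact_mod_cast hdpos
  set G := C a + C b * (1 + X) ^ (m + 1) + C c * (1 + X) ^ (m + 1 + N) with hGdef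
  set r : ℝ := (1 / (p : ℝ)) ^ (1 / (d : ℝ)) with hr
  have hr0 : 0 < r := by positivity
  have hrd : r ^ d = 1 / p := by
    rw [hr, ← Real.rpow_natCast, ← Real.rpow_mul (by positivity)]
    rw [one_div_mul_cancel hd'.ne', Real.rpow_one]
  have hr1 : r < 1 := by
    refine (pow_lt_one_iff_of_nonneg hr0.le hdpos.ne').mp ?_
    rw [hrd, div_lt_one (by linarith)]
    exact hp1'
  have hlogr : Real.log r = - (Real.log p / d) := by
    rw [hr, Real.log_rpow (by positivity), one_div (p : ℝ), Real.log_inv]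
    field_simp
  obtain ⟨i, hi, hmax, hstrict⟩ := exists_index_ge r hr0 S G hG (by
    intro z hz
    refine ⟨?_, (hS z hz).2⟩
    refine (pow_le_pow_iff_left₀ (norm_nonneg _) hr0.le hdpos.ne').mp ?_
    rw [hrd]
    exact padic_norm_pow_le p z (hS z hz).1)
  have hone := one_le_discBound p d hp1 hdpos
  rcases Nat.eq_zero_or_pos i with h0 | h0
  · have : S.card = 0 := by omega
    rw [this]
    simp only [Nat.cast_zero]
    linarith
  have hSi : (S.card : ℝ) ≤ i := by exact_mod_cast hi
  refine hSi.trans ?_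
  have hi1 : (1 : ℝ) ≤ i := by exact_mod_cast h0
  refine le_discBound p d hp1 hdpos i hi1 ?_
  have hlogi : 0 ≤ Real.log i := Real.log_nonneg hi1
  rcases Nat.lt_or_ge i 3 with h3 | h3
  · have : (i : ℝ) ≤ 2 := by exact_mod_cast (by omega : i ≤ 2)
    have h4 : ((i : ℝ) - 2) * Real.log p ≤ 0 := mul_nonpos_of_nonpos_of_nonneg (by linarith) hlogp.le
    have : 0 ≤ 2 * (d : ℝ) * Real.log i := by positivity
    linarith
  obtain ⟨k, rfl⟩ : ∃ k, i = k + 2 := ⟨i - 2, by omega⟩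
  have hcoeff : ∀ j, 1 ≤ j → G.coeff j =
      b * ((m + 1).choose j : L) + c * ((m + 1 + N).choose j : L) := by
    intro j hj
    rw [hGdef, coeff_add, coeff_add, coeff_C_mul, coeff_C_mul, coeff_C_of_ne_zero (by omega),
      coeff_one_add_X_pow, coeff_one_add_X_pow, zero_add]
  have hb := tri_coeff_bound p G.coeff b c m N hcoeff (k + 1) (by omega)
  set Q := max ‖G.coeff 1‖ ‖G.coeff 2‖ with hQ
  have hpos : 0 < ‖G.coeff (k + 2)‖ * r ^ (k + 2) :=
    lt_of_le_of_lt (by positivity) (hstrict (k + 3) (by omega))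
  have hQge : r ^ 2 * Q ≤ ‖G.coeff (k + 2)‖ * r ^ (k + 2) := by
    rw [hQ, mul_max_of_nonneg _ _ (by positivity)]
    refine max_le ?_ ?_
    · refine le_trans ?_ (hmax 1)
      rw [mul_comm]
      refine mul_le_mul_of_nonneg_left ?_ (norm_nonneg _)
      exact pow_le_pow_of_le_one hr0.le hr1.le (by norm_num)
    · rw [mul_comm]; exact hmax 2
  have hb' : ‖G.coeff (k + 2)‖ ≤ (((k + 2 : ℕ) : ℝ) ^ 2) * Q := by
    refine hb.trans ?_
    have hQ0 : 0 ≤ Q := le_max_of_le_left (norm_nonneg _)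
    refine mul_le_mul_of_nonneg_right ?_ hQ0
    push_cast
    nlinarith
  have hQpos : 0 < Q := by
    by_contra hcon
    have : Q = 0 := le_antisymm (not_lt.mp hcon) (le_max_of_le_left (norm_nonneg _))
    rw [this, mul_zero] at hb'
    have : ‖G.coeff (k + 2)‖ * r ^ (k + 2) ≤ 0 :=
      mul_nonpos_of_nonpos_of_nonneg hb' (by positivity)
    linarith
  have hfin : 1 ≤ ((k + 2 : ℕ) : ℝ) ^ 2 * r ^ k := by
    have : (r ^ 2 * Q) * 1 ≤ (r ^ 2 * Q) * (((k + 2 : ℕ) : ℝ) ^ 2 * r ^ k) := by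
      calc (r ^ 2 * Q) * 1 ≤ ‖G.coeff (k + 2)‖ * r ^ (k + 2) := by rw [mul_one]; exact hQge
        _ ≤ ((((k + 2 : ℕ) : ℝ) ^ 2) * Q) * r ^ (k + 2) := by gcongr
        _ = _ := by ring
    exact le_of_mul_le_mul_left this (by positivity)
  have hlog := Real.log_nonneg hfin
  rw [Real.log_mul (by positivity) (by positivity), Real.log_pow, Real.log_pow, hlogr] at hlog
  have hk : ((k + 2 : ℕ) : ℝ) - 2 = k := by push_cast; ring
  rw [hk]
  have : (k : ℝ) * (Real.log p / d) * d = k * Real.log p := by field_simp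
  push_cast at hlog ⊢
  nlinarith

lemma support_three_form {F : Type*} [Field F] (g : F[X]) (hg : g ≠ 0) (h3 : g.support.card ≤ 3) :
    ∃ (k m N : ℕ) (a b c : F),
      g = X ^ k * (C a + C b * X ^ (m + 1) + C c * X ^ (m + 1 + N)) := by
  have h0 : g.support.card ≠ 0 := by simpa using hg
  obtain h | h | h : g.support.card = 1 ∨ g.support.card = 2 ∨ g.support.card = 3 := by omega
  · obtain ⟨k, x, _, rfl⟩ := card_support_eq_one.mp h
    exact ⟨k, 0, 0, x, 0, 0, by simp⟩
  · obtain ⟨k, m, hkm, x, y, _, _, rfl⟩ := card_support_eq_two.mp h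
    obtain ⟨l, rfl⟩ := Nat.exists_eq_add_of_lt hkm
    exact ⟨k, l, 0, x, y, 0, by simp; ring⟩
  · obtain ⟨k, m, n, hkm, hmn, x, y, z, _, _, _, rfl⟩ := card_support_eq_three.mp h
    obtain ⟨l, rfl⟩ := Nat.exists_eq_add_of_lt hkm
    obtain ⟨l', rfl⟩ := Nat.exists_eq_add_of_lt hmn
    exact ⟨k, l, l' + 1, x, y, z, by ring⟩

lemma infinite_field (p : ℕ) [Fact p.Prime] (L : Type*) [NormedField L]
    [NormedAlgebra ℚ_[p] L] : Infinite L := by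
  haveI : CharZero L := charZero_of_injective_algebraMap (algebraMap ℚ_[p] L).injective
  infer_instance

variable (p) in
lemma near_count (g : L[X]) (hg : g ≠ 0) (h3 : g.support.card ≤ 3) (x : L) (hx : x ≠ 0)
    (S : Finset L) (hS : ∀ y ∈ S, y ≠ 0 ∧ g.eval y = 0 ∧ ‖y - x‖ < ‖x‖) :
    (S.card : ℝ) ≤ discBound p (Module.finrank ℚ_[p] L) := by
  classical
  haveI := infinite_field p L
  obtain ⟨k, m, N, a, b, c, hform⟩ := support_three_form g hg h3
  have hinj : Function.Injective (fun y : L => y / x - 1) := by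
    intro y z h
    simpa [hx] using h
  rw [← Finset.card_image_of_injective S hinj]
  refine disc_count p a (b * x ^ (m + 1)) (c * x ^ (m + 1 + N)) m N ?_ _ ?_
  · intro h0
    apply hg
    rw [hform]
    convert mul_zero _
    refine Polynomial.funext (fun t => ?_)
    have := congrArg (Polynomial.eval (t / x - 1)) h0
    simp only [eval_add, eval_mul, eval_C, eval_pow, eval_one, eval_X, eval_zero,
      add_sub_cancel, div_pow] at this ⊢
    rw [← this]
    field_simp
  · intro z hz
    obtain ⟨y, hy, rfl⟩ := Finset.mem_image.mp hz
    obtain ⟨hy0, hy1, hy2⟩ := hS y hy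
    refine ⟨?_, ?_⟩
    · have e : y / x - 1 = (y - x) / x := by field_simp
      rw [e, norm_div, div_lt_one (norm_pos_iff.mpr hx)]
      exact hy2
    · rw [hform] at hy1
      simp only [eval_add, eval_mul, eval_C, eval_pow, eval_one, eval_X,
        add_sub_cancel, div_pow, mul_eq_zero] at hy1 ⊢
      rcases hy1 with h | h
      · exact absurd h (pow_ne_zero _ hy0)
      · rw [← h]
        field_simp

variable (p) in
lemma tri_count (g : L[X]) (hg : g ≠ 0) (h3 : g.support.card ≤ 3)
    (S : Finset L) (hS : ∀ y ∈ S, y ≠ 0 ∧ g.eval y = 0) :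
    (S.card : ℝ) ≤ 2 * ((p : ℝ) ^ (Module.finrank ℚ_[p] L) - 1) *
      discBound p (Module.finrank ℚ_[p] L) := by
  classical
  set d := Module.finrank ℚ_[p] L with hd
  have hdpos : 0 < d := Module.finrank_pos
  have hp1 : 1 < p := hp.out.one_lt
  have hp1' : (1 : ℝ) < p := by exact_mod_cast hp1
  have hone := one_le_discBound p d hp1 hdpos
  set B := ⌊discBound p d⌋₊ with hB
  have hcard : S.card ≤ ((p ^ d - 1) * B) * (S.image (fun x => ‖x‖)).card := by
    refine Finset.card_le_mul_card_image S _ ?_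
    intro ρ hρ
    obtain ⟨x0, hx0, rfl⟩ := Finset.mem_image.mp hρ
    refine card_le_of_classes p _ ‖x0‖ (norm_pos_iff.mpr (hS x0 hx0).1)
      (fun x hx => (Finset.mem_filter.mp hx).2) B ?_
    intro x hx S' hS' hnear
    obtain ⟨hxS, hxn⟩ := Finset.mem_filter.mp hx
    refine Nat.le_floor ?_
    refine near_count p g hg h3 x (hS x hxS).1 S' ?_
    intro y hy
    have hyS := (Finset.mem_filter.mp (hS' hy)).1
    refine ⟨(hS y hyS).1, (hS y hyS).2, ?_⟩
    rw [hxn]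
    exact hnear y hy
  have h2 := card_norms_le_two g hg h3 S hS
  have hcard' : S.card ≤ ((p ^ d - 1) * B) * 2 := hcard.trans (Nat.mul_le_mul_left _ h2)
  have hpd : (1 : ℝ) ≤ (p : ℝ) ^ d := one_le_pow₀ hp1'.le
  have hr : (S.card : ℝ) ≤ (((p : ℝ) ^ d - 1) * B) * 2 := by
    have := (Nat.cast_le (α := ℝ)).mpr hcard'
    rw [Nat.cast_mul, Nat.cast_mul, Nat.cast_sub (Nat.one_le_pow _ _ (by omega))] at this
    simpa using this
  have hfl : (B : ℝ) ≤ discBound p d := Nat.floor_le (by linarith)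
  calc _ ≤ _ := hr
    _ ≤ (((p : ℝ) ^ d - 1) * discBound p d) * 2 := by
      have : 0 ≤ (p : ℝ) ^ d - 1 := by linarith
      gcongr
    _ = _ := by ring

end Padic3

section Sys

lemma cv_pow {F : Type*} [Field F] (a b : F) (ha : a ≠ 0) (hb : b ≠ 0) (i j k l m n : ℤ) :
    (a ^ i * b ^ j) ^ k * (a ^ l * b ^ m) ^ n = a ^ (i * k + l * n) * b ^ (j * k + m * n) := by
  rw [mul_zpow, mul_zpow, ← zpow_mul, ← zpow_mul, ← zpow_mul, ← zpow_mul, zpow_add₀ ha,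
    zpow_add₀ hb]
  ring

lemma cv_fwd {F : Type*} [Field F] (x y : F) (hx : x ≠ 0) (hy : y ≠ 0) (u v r s : ℤ)
    (h : r * u + s * v = 1) :
    (x ^ u * y ^ v) ^ r * (x ^ s * y ^ (-r)) ^ v = x ∧
    (x ^ u * y ^ v) ^ s * (x ^ s * y ^ (-r)) ^ (-u) = y := by
  constructor
  · rw [cv_pow x y hx hy]
    rw [show u * r + s * v = 1 by linarith, show v * r + -r * v = 0 by ring]
    simp
  · rw [cv_pow x y hx hy]
    rw [show u * s + s * -u = 0 by ring, show v * s + -r * -u = 1 by linarith]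
    simp

lemma cv_bwd {F : Type*} [Field F] (w t : F) (hw : w ≠ 0) (ht : t ≠ 0) (u v r s : ℤ)
    (h : r * u + s * v = 1) :
    (w ^ r * t ^ v) ^ u * (w ^ s * t ^ (-u)) ^ v = w ∧
    (w ^ r * t ^ v) ^ s * (w ^ s * t ^ (-u)) ^ (-r) = t := by
  constructor
  · rw [cv_pow w t hw ht]
    rw [show v * u + -u * v = 0 by ring, h]
    simp
  · rw [cv_pow w t hw ht]
    rw [show r * s + s * -r = 0 by ring, show v * s + -u * -r = 1 by linarith]
    simp

lemma binom_zero_iff {F : Type*} [Field F] (x y c d : F) (hx : x ≠ 0) (hy : y ≠ 0) (hc : c ≠ 0)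
    (a b a' b' : ℕ) :
    c * (x ^ a * y ^ b) + d * (x ^ a' * y ^ b') = 0 ↔
      x ^ ((a : ℤ) - a') * y ^ ((b : ℤ) - b') = -d / c := by
  rw [zpow_sub₀ hx, zpow_sub₀ hy]
  simp only [zpow_natCast]
  have h1 : x ^ a' ≠ 0 := pow_ne_zero _ hx
  have h2 : y ^ b' ≠ 0 := pow_ne_zero _ hy
  rw [div_mul_div_comm, div_eq_div_iff (mul_ne_zero h1 h2) hc]
  constructor
  · intro h
    linear_combination h
  · intro h
    linear_combination h

/-- The trinomial in the new variable. -/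
lemma exists_trinomial {F : Type*} [Field F] (c1 d1 w : F) (m m' : ℕ)
    (u v r s : ℤ) :
    ∃ (P : F[X]) (K : ℕ), P.support.card ≤ 3 ∧ ∀ t : F, t ≠ 0 →
      P.eval t = t ^ K * (c1 * (w ^ r * t ^ v) ^ m + d1 * (w ^ r * t ^ v) ^ m' -
        w ^ s * t ^ (-u)) := by
  classical
  set K : ℕ := v.natAbs * m + v.natAbs * m' + u.natAbs with hK
  have hv : -(v.natAbs : ℤ) ≤ v := by omega
  have hKz : (K : ℤ) = (v.natAbs : ℤ) * m + (v.natAbs : ℤ) * m' + u.natAbs := by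
    rw [hK]; push_cast; ring
  have hnn1 : (0 : ℤ) ≤ (v.natAbs : ℤ) * m := by positivity
  have hnn2 : (0 : ℤ) ≤ (v.natAbs : ℤ) * m' := by positivity
  have h1 : 0 ≤ v * m + K := by
    have : -(v.natAbs : ℤ) * m ≤ v * m := mul_le_mul_of_nonneg_right hv (by positivity)
    rw [hKz]
    have : (0 : ℤ) ≤ u.natAbs := by positivity
    linarith
  have h2 : 0 ≤ v * m' + K := by
    have : -(v.natAbs : ℤ) * m' ≤ v * m' := mul_le_mul_of_nonneg_right hv (by positivity)
    rw [hKz]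
    have : (0 : ℤ) ≤ u.natAbs := by positivity
    linarith
  have h3 : 0 ≤ -u + K := by
    rw [hKz]
    have : u ≤ u.natAbs := by omega
    linarith
  refine ⟨C (c1 * w ^ (r * m)) * X ^ (v * m + K).toNat + C (d1 * w ^ (r * m')) *
    X ^ (v * m' + K).toNat + C (-w ^ s) * X ^ (-u + K).toNat, K, ?_, ?_⟩
  · exact (Finset.card_le_card (support_trinomial_subset _ _ _ _ _ _)).trans Finset.card_le_three
  · intro t ht
    have key : ∀ e : ℤ, 0 ≤ e + K → t ^ (e + K).toNat = t ^ e * t ^ K := by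
      intro e he
      rw [← zpow_natCast, Int.toNat_of_nonneg he, zpow_add₀ ht, zpow_natCast]
    simp only [eval_add, eval_mul, eval_C, eval_pow, eval_X]
    rw [key _ h1, key _ h2, key _ h3, mul_pow, mul_pow, ← zpow_natCast (w ^ r), ← zpow_natCast (w ^ r),
      ← zpow_natCast (t ^ v), ← zpow_natCast (t ^ v), ← zpow_mul, ← zpow_mul, ← zpow_mul, ← zpow_mul]
    ring

variable {p : ℕ} [hp : Fact p.Prime] {L : Type*} [NormedField L] [NormedAlgebra ℚ_[p] L]
  [IsUltrametricDist L] [FiniteDimensional ℚ_[p] L]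

set_option linter.unusedSectionVars false
set_option linter.style.haveILetI false

variable (p) in
lemma sys_count (c1 d1 c2 d2 : L) (m m' a b a' b' : ℕ) (X1 X2 : L[X])
    (hX1 : ∀ x, X1.eval x = c1 * x ^ m + d1 * x ^ m')
    (hX2 : X2 = C c2 * (X ^ a * X1 ^ b) + C d2 * (X ^ a' * X1 ^ b')) (hne : X2 ≠ 0)
    (S : Finset L) (hS : ∀ x ∈ S, x ≠ 0 ∧ X1.eval x ≠ 0 ∧ X2.eval x = 0) :
    (S.card : ℝ) ≤
      (Module.finrank ℚ_[p] L * p * ((p : ℝ) ^ (Module.finrank ℚ_[p] L) - 1)) / ((p : ℝ) - 1) *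
      (2 * ((p : ℝ) ^ (Module.finrank ℚ_[p] L) - 1) * discBound p (Module.finrank ℚ_[p] L)) := by
  classical
  haveI := infinite_field p L
  set d := Module.finrank ℚ_[p] L with hd
  have hdpos : 0 < d := Module.finrank_pos
  have hp1 : 1 < p := hp.out.one_lt
  have hp1' : (1 : ℝ) < p := by exact_mod_cast hp1
  have hone := one_le_discBound p d hp1 hdpos
  have hpd : (0 : ℝ) ≤ (p : ℝ) ^ d - 1 := by linarith [one_le_pow₀ hp1'.le (n := d)]
  have hp0 : (0 : ℝ) < (p : ℝ) - 1 := by linarith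
  set T : ℝ := 2 * ((p : ℝ) ^ d - 1) * discBound p d with hT
  have hT0 : 0 ≤ T := by positivity
  set W : ℝ := (d * p * ((p : ℝ) ^ d - 1)) / ((p : ℝ) - 1) with hW
  have hW0 : 0 ≤ W := by positivity
  rcases S.eq_empty_or_nonempty with hSe | ⟨x0, hx0⟩
  · subst hSe
    simpa using mul_nonneg hW0 hT0
  have hev : ∀ x, X2.eval x = c2 * (x ^ a * (X1.eval x) ^ b) + d2 * (x ^ a' * (X1.eval x) ^ b') := by
    intro x
    rw [hX2]
    simp
  have hc2 : c2 ≠ 0 := by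
    rintro rfl
    obtain ⟨h1, h2, h3⟩ := hS x0 hx0
    rw [hev] at h3
    have hd2 : d2 = 0 := by simpa [h1, h2] using h3
    apply hne
    rw [hX2, hd2]
    simp
  have hd2 : d2 ≠ 0 := by
    rintro rfl
    obtain ⟨h1, h2, h3⟩ := hS x0 hx0
    rw [hev] at h3
    simp [h1, h2, hc2] at h3
  set κ := -d2 / c2 with hκ
  have hκ0 : κ ≠ 0 := div_ne_zero (neg_ne_zero.mpr hd2) hc2
  have hiff : ∀ x, x ≠ 0 → X1.eval x ≠ 0 →
      (X2.eval x = 0 ↔ x ^ ((a : ℤ) - a') * (X1.eval x) ^ ((b : ℤ) - b') = κ) := by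
    intro x h1 h2
    rw [hev]
    exact binom_zero_iff x _ c2 d2 h1 h2 hc2 a b a' b'
  have hg : 0 < Int.gcd ((a : ℤ) - a') ((b : ℤ) - b') := by
    rw [Int.gcd_pos_iff]
    by_contra hcon
    push Not at hcon
    obtain ⟨hu, hv⟩ := hcon
    have ha : a = a' := by omega
    have hb : b = b' := by omega
    obtain ⟨h1, h2, h3⟩ := hS x0 hx0
    have h4 := (hiff x0 h1 h2).mp h3
    rw [hu, hv] at h4
    simp only [zpow_zero, mul_one] at h4
    have : d2 = -c2 := by
      rw [hκ, eq_div_iff hc2] at h4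
      linear_combination h4
    apply hne
    rw [hX2, this, ha, hb]
    simp
  obtain ⟨u, v, huv, hu, hv⟩ := Int.exists_gcd_one hg
  set g := Int.gcd ((a : ℤ) - a') ((b : ℤ) - b') with hgdef
  obtain ⟨r, s, hrs⟩ : ∃ r s : ℤ, r * u + s * v = 1 := by
    refine ⟨Int.gcdA u v, Int.gcdB u v, ?_⟩
    have := Int.gcd_eq_gcd_ab u v
    rw [huv] at this
    push_cast at this
    linarith
  have hpowg : ∀ x y : L, x ^ ((a : ℤ) - a') * y ^ ((b : ℤ) - b') = (x ^ u * y ^ v) ^ g := by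
    intro x y
    rw [hu, hv, zpow_mul, zpow_mul, mul_pow, zpow_natCast, zpow_natCast]
  -- the map to the torus quotient
  have himg : ((S.image (fun x => x ^ u * (X1.eval x) ^ v)).card : ℝ) ≤ W := by
    refine roots_pow_card p g hg κ _ ?_
    intro w hw
    obtain ⟨x, hx, rfl⟩ := Finset.mem_image.mp hw
    obtain ⟨h1, h2, h3⟩ := hS x hx
    refine ⟨mul_ne_zero (zpow_ne_zero _ h1) (zpow_ne_zero _ h2), ?_⟩
    rw [← hpowg]
    exact (hiff x h1 h2).mp h3
  have hcard : S.card ≤ ⌊T⌋₊ * (S.image (fun x => x ^ u * (X1.eval x) ^ v)).card := by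
    refine Finset.card_le_mul_card_image S _ ?_
    intro w hw
    have hw0 : w ≠ 0 := by
      obtain ⟨x, hx, rfl⟩ := Finset.mem_image.mp hw
      obtain ⟨h1, h2, h3⟩ := hS x hx
      exact mul_ne_zero (zpow_ne_zero _ h1) (zpow_ne_zero _ h2)
    have hwg : w ^ g = κ := by
      obtain ⟨x, hx, rfl⟩ := Finset.mem_image.mp hw
      obtain ⟨h1, h2, h3⟩ := hS x hx
      rw [← hpowg]
      exact (hiff x h1 h2).mp h3
    refine Nat.le_floor ?_
    obtain ⟨P, K, hP3, hPev⟩ := exists_trinomial c1 d1 w m m' u v r s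
    set S' := S.filter (fun x => x ^ u * (X1.eval x) ^ v = w) with hS'
    have hinj : Set.InjOn (fun x => x ^ s * (X1.eval x) ^ (-r)) (S' : Set L) := by
      intro x hx y hy hxy
      obtain ⟨hxS, hxw⟩ := Finset.mem_filter.mp hx
      obtain ⟨hyS, hyw⟩ := Finset.mem_filter.mp hy
      have e1 := (cv_fwd x _ (hS x hxS).1 (hS x hxS).2.1 u v r s hrs).1
      have e2 := (cv_fwd y _ (hS y hyS).1 (hS y hyS).2.1 u v r s hrs).1
      simp only at hxy
      rw [← e1, ← e2, hxw, hyw, hxy]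
    rw [← Finset.card_image_of_injOn hinj]
    refine tri_count p P ?_ hP3 _ ?_
    · intro hP0
      apply hne
      have hroot : ∀ t : L, t ≠ 0 → X1.eval (w ^ r * t ^ v) = w ^ s * t ^ (-u) := by
        intro t ht
        have h := hPev t ht
        rw [hP0, eval_zero] at h
        have := (mul_eq_zero.mp h.symm).resolve_left (pow_ne_zero _ ht)
        rw [hX1]
        exact sub_eq_zero.mp this
      have hinf : Set.Infinite (Set.image (fun t : L => w ^ r * t ^ v) {t | t ≠ 0}) := by
        refine Set.Infinite.image ?_ ?_
        · intro t ht t' ht' htt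
          have e1 := (cv_bwd w t hw0 ht u v r s hrs).2
          have e2 := (cv_bwd w t' hw0 ht' u v r s hrs).2
          rw [← hroot t ht] at e1
          rw [← hroot t' ht'] at e2
          simp only at htt
          rw [← e1, ← e2, htt]
        · exact (Set.finite_singleton (0 : L)).infinite_compl
      refine Polynomial.eq_zero_of_infinite_isRoot _ (hinf.mono ?_)
      rintro _ ⟨t, ht, rfl⟩
      have ht : t ≠ 0 := ht
      have hx : w ^ r * t ^ v ≠ 0 := mul_ne_zero (zpow_ne_zero _ hw0) (zpow_ne_zero _ ht)
      have hy : X1.eval (w ^ r * t ^ v) ≠ 0 := by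
        rw [hroot t ht]
        exact mul_ne_zero (zpow_ne_zero _ hw0) (zpow_ne_zero _ ht)
      change X2.eval (w ^ r * t ^ v) = 0
      rw [hiff _ hx hy, hpowg, hroot t ht, (cv_bwd w t hw0 ht u v r s hrs).1]
      exact hwg
    · intro t ht
      obtain ⟨x, hx, rfl⟩ := Finset.mem_image.mp ht
      obtain ⟨hxS, hxw⟩ := Finset.mem_filter.mp hx
      obtain ⟨h1, h2, h3⟩ := hS x hxS
      have ht0 : x ^ s * (X1.eval x) ^ (-r) ≠ 0 :=
        mul_ne_zero (zpow_ne_zero _ h1) (zpow_ne_zero _ h2)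
      refine ⟨ht0, ?_⟩
      rw [hPev _ ht0]
      have e := cv_fwd x _ h1 h2 u v r s hrs
      rw [hxw] at e
      rw [e.1, e.2, ← hX1, sub_self, mul_zero]
  have hr : (S.card : ℝ) ≤ ⌊T⌋₊ * ((S.image (fun x => x ^ u * (X1.eval x) ^ v)).card : ℝ) := by
    exact_mod_cast hcard
  calc _ ≤ _ := hr
    _ ≤ T * W := by
      exact mul_le_mul (Nat.floor_le hT0) himg (Nat.cast_nonneg _) hT0
    _ = _ := by ring

variable (p) in
lemma binomial_count (c1 d1 : L) (m m' : ℕ) (Q : L[X])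
    (hQ : Q = C c1 * X ^ m + C d1 * X ^ m') (hne : Q ≠ 0)
    (S : Finset L) (hS : ∀ x ∈ S, x ≠ 0 ∧ Q.eval x = 0) :
    (S.card : ℝ) ≤
      (Module.finrank ℚ_[p] L * p * ((p : ℝ) ^ (Module.finrank ℚ_[p] L) - 1)) / ((p : ℝ) - 1) := by
  set d := Module.finrank ℚ_[p] L with hd
  have hp1' : (1 : ℝ) < p := by exact_mod_cast hp.out.one_lt
  have hpd : (0 : ℝ) ≤ (p : ℝ) ^ d - 1 := by linarith [one_le_pow₀ hp1'.le (n := d)]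
  have hp0 : (0 : ℝ) < (p : ℝ) - 1 := by linarith
  rcases S.eq_empty_or_nonempty with hSe | ⟨x0, hx0⟩
  · subst hSe
    rw [Finset.card_empty, Nat.cast_zero]
    positivity
  wlog hmm : m ≤ m' generalizing m m' c1 d1
  · exact this d1 c1 m' m (by rw [hQ, add_comm]) (by omega)
  obtain ⟨n, rfl⟩ := Nat.exists_eq_add_of_le hmm
  have hev : ∀ x, x ≠ 0 → Q.eval x = 0 → c1 + d1 * x ^ n = 0 := by
    intro x hx h
    rw [hQ] at h
    simp only [eval_add, eval_mul, eval_C, eval_pow, eval_X] at h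
    have : x ^ m * (c1 + d1 * x ^ n) = 0 := by rw [← h]; ring
    exact (mul_eq_zero.mp this).resolve_left (pow_ne_zero _ hx)
  have h0 := hev x0 (hS x0 hx0).1 (hS x0 hx0).2
  have hd1 : d1 ≠ 0 := by
    rintro rfl
    apply hne
    have : c1 = 0 := by simpa using h0
    rw [hQ, this]; simp
  have hn : 0 < n := by
    rcases Nat.eq_zero_or_pos n with rfl | h
    · exfalso
      apply hne
      rw [hQ]
      have : c1 + d1 = 0 := by simpa using h0
      rw [add_zero, ← add_mul, ← C_add, this]; simp
    · exact h
  refine roots_pow_card p n hn (-c1 / d1) S ?_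
  intro x hx
  refine ⟨(hS x hx).1, ?_⟩
  have := hev x (hS x hx).1 (hS x hx).2
  rw [eq_div_iff hd1]
  linear_combination this

end Sys

section Pres

/-- Every polynomial has a presentation, by the Horner scheme. -/
lemma exists_pres {F : Type*} [Field F] (f : F[X]) : ∃ s, HasAddComplexityPres f s := by
  classical
  set n := f.natDegree with hn
  -- H j is the Horner partial polynomial obtained after dropping n - j coefficients
  set H : ℕ → F[X] := fun j => (divX^[n - j]) f with hH
  have hdeg : ∀ k, ((divX^[k]) f).natDegree = n - k := by
    intro k
    induction k with
    | zero => simp [hn]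
    | succ k ih =>
      rw [Function.iterate_succ_apply', natDegree_divX_eq_natDegree_tsub_one, ih]
      omega
  have h0 : H 0 = C ((H 0).coeff 0) := by
    apply eq_C_of_natDegree_eq_zero
    rw [hH]
    simp only
    rw [hdeg]
    omega
  have hstep : ∀ j, j < n → H (j + 1) = X * H j + C ((H (j + 1)).coeff 0) := by
    intro j hj
    have : H j = divX (H (j + 1)) := by
      rw [hH]
      simp only
      rw [← Function.iterate_succ_apply' divX]
      congr 1
      omega
    rw [this]
    exact (X_mul_divX_add _).symm
  have hlast : H n = f := by simp [hH]
  set Xs : ℕ → F[X] := fun j => if j = 0 then X else H (j - 1) with hXs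
  refine ⟨n + 1, fun j => if j = 1 then 0 else 1, fun j => (H (j - 1)).coeff 0,
    fun i j => if (i = 0 ∧ j < n + 2) ∨ i + 1 = j then 1 else 0, fun _ _ => 0, Xs, ?_, ?_, ?_⟩
  · simp [hXs]
  · intro j hj1 hj2
    obtain ⟨k, rfl⟩ := Nat.exists_eq_add_of_le' hj1
    rcases k with _ | k
    · simpa [hXs] using h0
    · have e : Xs (k + 1 + 1) = H (k + 1) := by simp [hXs]
      rw [e, Finset.prod_range_succ, Finset.prod_range_succ']
      have hz : ∏ i ∈ Finset.range k, Xs (i + 1) ^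
          (if (i + 1 = 0 ∧ k + 1 + 1 < n + 2) ∨ i + 1 + 1 = k + 1 + 1 then 1 else 0) = 1 := by
        refine Finset.prod_eq_one (fun i hi => ?_)
        have : i < k := Finset.mem_range.mp hi
        rw [if_neg (by omega), pow_zero]
      beta_reduce
      rw [hz, if_neg (show ¬ (k + 1 + 1 = 1) by omega), if_pos (by omega), if_pos (by omega)]
      have e1 : Xs (k + 1) = H k := by simp [hXs]
      have e0 : Xs 0 = X := by simp [hXs]
      rw [e1, e0]
      simpa using hstep k (by omega)
  · have e : Xs (n + 1) = f := by simp [hXs, hlast]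
    rw [Finset.prod_range_succ, e]
    have hz : ∏ i ∈ Finset.range (n + 1), Xs i ^
        (if (i = 0 ∧ n + 1 + 1 < n + 2) ∨ i + 1 = n + 1 + 1 then 1 else 0) = 1 := by
      refine Finset.prod_eq_one (fun i hi => ?_)
      have : i < n + 1 := Finset.mem_range.mp hi
      rw [if_neg (by omega), pow_zero]
    rw [hz]
    simp

lemma pres_addComplexity {F : Type*} [Field F] (f : F[X]) :
    HasAddComplexityPres f (addComplexity f) :=
  Nat.sInf_mem (s := {s | HasAddComplexityPres f s}) (exists_pres f)

end Pres

section Main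

variable {p : ℕ} [hp : Fact p.Prime] {L : Type*} [NormedField L] [NormedAlgebra ℚ_[p] L]
  [IsUltrametricDist L] [FiniteDimensional ℚ_[p] L]

set_option linter.unusedSectionVars false

lemma pres_zero {F : Type*} [Field F] (f : F[X]) (h : HasAddComplexityPres f 0) :
    ∃ (c : F) (k : ℕ), f = C c * X ^ k := by
  obtain ⟨c, d, m, m', Xs, h0, hj, hf⟩ := h
  refine ⟨c 1, m 0 1, ?_⟩
  rw [hf]
  simp [h0]

lemma pres_one {F : Type*} [Field F] (f : F[X]) (h : HasAddComplexityPres f 1) :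
    ∃ (c c1 d1 : F) (k l m m' : ℕ) (X1 : F[X]), X1 = C c1 * X ^ m + C d1 * X ^ m' ∧
      f = C c * (X ^ k * X1 ^ l) := by
  obtain ⟨c, d, m, m', Xs, h0, hj, hf⟩ := h
  refine ⟨c 2, c 1, d 1, m 0 2, m 1 2, m 0 1, m' 0 1, Xs 1, ?_, ?_⟩
  · rw [hj 1 le_rfl le_rfl]
    simp [h0]
  · rw [hf]
    simp [Finset.prod_range_succ, h0]

lemma pres_two {F : Type*} [Field F] (f : F[X]) (h : HasAddComplexityPres f 2) :
    ∃ (c c1 d1 c2 d2 : F) (k l n m m' a b a' b' : ℕ) (X1 X2 : F[X]),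
      X1 = C c1 * X ^ m + C d1 * X ^ m' ∧
      X2 = C c2 * (X ^ a * X1 ^ b) + C d2 * (X ^ a' * X1 ^ b') ∧
      f = C c * (X ^ k * X1 ^ l * X2 ^ n) := by
  obtain ⟨c, d, m, m', Xs, h0, hj, hf⟩ := h
  refine ⟨c 3, c 1, d 1, c 2, d 2, m 0 3, m 1 3, m 2 3, m 0 1, m' 0 1, m 0 2, m 1 2, m' 0 2,
    m' 1 2, Xs 1, Xs 2, ?_, ?_, ?_⟩
  · rw [hj 1 le_rfl (by norm_num)]
    simp [h0]
  · rw [hj 2 (by norm_num) le_rfl]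
    simp [Finset.prod_range_succ, h0]
  · rw [hf]
    simp [Finset.prod_range_succ, h0]

/-- Reduction of the count of all roots to the count of nonzero ones. -/
lemma ncard_le_of_nonzero {F : Type*} [Field F] (f : F[X]) (hf : f ≠ 0) (B : ℝ)
    (h : ∀ S : Finset F, (∀ x ∈ S, x ≠ 0 ∧ f.eval x = 0) → (S.card : ℝ) ≤ B) :
    ({x : F | f.eval x = 0}.ncard : ℝ) ≤ 1 + B := by
  classical
  have e : {x : F | f.eval x = 0} = (f.roots.toFinset : Set F) := by
    ext x
    simp [hf]
  rw [e, Set.ncard_coe_finset]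
  have h1 := h (f.roots.toFinset.erase 0) (by
    intro x hx
    simpa [hf] using hx)
  have h2 : f.roots.toFinset.card ≤ (f.roots.toFinset.erase 0).card + 1 := by
    have := Finset.pred_card_le_card_erase (s := f.roots.toFinset) (a := 0)
    omega
  have h3 : (f.roots.toFinset.card : ℝ) ≤ (f.roots.toFinset.erase 0).card + 1 := by
    exact_mod_cast h2
  linarith

lemma count_zero (f : L[X]) (hf : f ≠ 0) (h : HasAddComplexityPres f 0)
    (S : Finset L) (hS : ∀ x ∈ S, x ≠ 0 ∧ f.eval x = 0) : S.card = 0 := by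
  obtain ⟨c, k, rfl⟩ := pres_zero f h
  rw [Finset.card_eq_zero]
  refine Finset.eq_empty_of_forall_notMem (fun x hx => ?_)
  obtain ⟨h1, h2⟩ := hS x hx
  have hc : c = 0 := by simpa [h1] using h2
  exact hf (by rw [hc]; simp)

variable (p) in
lemma count_one (f : L[X]) (hf : f ≠ 0) (h : HasAddComplexityPres f 1)
    (S : Finset L) (hS : ∀ x ∈ S, x ≠ 0 ∧ f.eval x = 0) :
    (S.card : ℝ) ≤
      (Module.finrank ℚ_[p] L * p * ((p : ℝ) ^ (Module.finrank ℚ_[p] L) - 1)) / ((p : ℝ) - 1) := by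
  obtain ⟨c, c1, d1, k, l, m, m', X1, hX1, hform⟩ := pres_one f h
  have hc : c ≠ 0 := by
    rintro rfl
    exact hf (by rw [hform]; simp)
  rcases Nat.eq_zero_or_pos l with rfl | hl
  · refine binomial_count p c 0 k 0 f (by rw [hform]; simp) hf S hS
  · have hne : X1 ≠ 0 := by
      rintro h0
      exact hf (by rw [hform, h0]; simp [hl.ne'])
    refine binomial_count p c1 d1 m m' X1 hX1 hne S ?_
    intro x hx
    obtain ⟨h1, h2⟩ := hS x hx
    refine ⟨h1, ?_⟩
    rw [hform] at h2
    simp only [eval_mul, eval_C, eval_pow, eval_X, mul_eq_zero, hc, false_or, pow_eq_zero_iff',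
      h1, false_and] at h2
    exact h2.1

variable (p) in
lemma count_two (f : L[X]) (hf : f ≠ 0) (h : HasAddComplexityPres f 2)
    (S : Finset L) (hS : ∀ x ∈ S, x ≠ 0 ∧ f.eval x = 0) :
    (S.card : ℝ) ≤
      (Module.finrank ℚ_[p] L * p * ((p : ℝ) ^ (Module.finrank ℚ_[p] L) - 1)) / ((p : ℝ) - 1) +
      (Module.finrank ℚ_[p] L * p * ((p : ℝ) ^ (Module.finrank ℚ_[p] L) - 1)) / ((p : ℝ) - 1) *
      (2 * ((p : ℝ) ^ (Module.finrank ℚ_[p] L) - 1) * discBound p (Module.finrank ℚ_[p] L)) := by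
  classical
  have hnn : (0 : ℝ) ≤ (Module.finrank ℚ_[p] L * p * ((p : ℝ) ^ (Module.finrank ℚ_[p] L) - 1)) /
      ((p : ℝ) - 1) *
      (2 * ((p : ℝ) ^ (Module.finrank ℚ_[p] L) - 1) * discBound p (Module.finrank ℚ_[p] L)) := by
    have hone := one_le_discBound p (Module.finrank ℚ_[p] L) hp.out.one_lt Module.finrank_pos
    have hp1' : (1 : ℝ) < p := by exact_mod_cast hp.out.one_lt
    have hpd : (0 : ℝ) ≤ (p : ℝ) ^ (Module.finrank ℚ_[p] L) - 1 := by
      linarith [one_le_pow₀ hp1'.le (n := Module.finrank ℚ_[p] L)]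
    have hp0 : (0 : ℝ) < (p : ℝ) - 1 := by linarith
    positivity
  obtain ⟨c, c1, d1, c2, d2, k, l, n, m, m', a, b, a', b', X1, X2, hX1, hX2, hform⟩ := pres_two f h
  have hc : c ≠ 0 := by
    rintro rfl
    exact hf (by rw [hform]; simp)
  have hroot : ∀ x ∈ S, (X1.eval x = 0 ∧ l ≠ 0) ∨ (X2.eval x = 0 ∧ n ≠ 0) := by
    intro x hx
    obtain ⟨h1, h2⟩ := hS x hx
    rw [hform] at h2
    simp only [eval_mul, eval_C, eval_pow, eval_X, mul_eq_zero, hc, false_or, pow_eq_zero_iff',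
      h1, false_and] at h2
    exact h2
  by_cases hX10 : X1 = 0
  · -- then `X2` is a binomial in `X`
    have hl : l = 0 := by
      by_contra hl
      exact hf (by rw [hform, hX10]; simp [hl])
    by_cases hn : n = 0
    · have : S = ∅ := by
        refine Finset.eq_empty_of_forall_notMem (fun x hx => ?_)
        rcases hroot x hx with h' | h'
        · exact h'.2 hl
        · exact h'.2 hn
      have h1 := binomial_count p 1 0 0 0 (1 : L[X]) (by simp) one_ne_zero (∅ : Finset L) (by simp)
      rw [this]
      linarith
    have hne : X2 ≠ 0 := by
      intro h0
      exact hf (by rw [hform, h0]; simp [hn])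
    have hb := binomial_count p (c2 * 0 ^ b) (d2 * 0 ^ b') a a' X2
      (by rw [hX2, hX10]; simp only [map_mul, map_pow, map_zero]; ring) hne S (by
        intro x hx
        refine ⟨(hS x hx).1, ?_⟩
        rcases hroot x hx with h' | h'
        · exact absurd hl h'.2
        · exact h'.1)
    linarith
  · have hs := Finset.card_filter_add_card_filter_not (s := S) (fun x => X1.eval x = 0)
    have hA := binomial_count p c1 d1 m m' X1 hX1 hX10 (S.filter (fun x => X1.eval x = 0)) (by
      intro x hx
      obtain ⟨h1, h2⟩ := Finset.mem_filter.mp hx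
      exact ⟨(hS x h1).1, h2⟩)
    have hs' : ((S.filter (fun x => X1.eval x = 0)).card : ℝ) +
        (S.filter (fun x => ¬ X1.eval x = 0)).card = S.card := by exact_mod_cast hs
    by_cases hX20 : X2 = 0
    · have hn : n = 0 := by
        by_contra hn
        exact hf (by rw [hform, hX20]; simp [hn])
      have : S.filter (fun x => ¬ X1.eval x = 0) = ∅ := by
        refine Finset.eq_empty_of_forall_notMem (fun x hx => ?_)
        obtain ⟨h1, h2⟩ := Finset.mem_filter.mp hx
        rcases hroot x h1 with h' | h'
        · exact h2 h'.1
        · exact h'.2 hn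
      rw [this, Finset.card_empty, Nat.cast_zero] at hs'
      linarith
    · have hB := sys_count p c1 d1 c2 d2 m m' a b a' b' X1 X2 (by intro x; rw [hX1]; simp) hX2 hX20
        (S.filter (fun x => ¬ X1.eval x = 0)) (by
          intro x hx
          obtain ⟨h1, h2⟩ := Finset.mem_filter.mp hx
          refine ⟨(hS x h1).1, h2, ?_⟩
          rcases hroot x h1 with h' | h'
          · exact absurd h'.1 h2
          · exact h'.1)
      linarith

variable (p) in
lemma main_normed (d : ℕ) (hd : Module.finrank ℚ_[p] L = d)
    (c : ℝ) (hc : c = Real.exp 1 / (Real.exp 1 - 1))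
    (f : L[X]) (hf : f ≠ 0) :
    (addComplexity f ≤ 1 →
      ({x : L | f.eval x = 0}.ncard : ℝ) ≤
        1 + (d * p * ((p : ℝ) ^ d - 1)) / ((p : ℝ) - 1)) ∧
    (addComplexity f ≤ 2 →
      ({x : L | f.eval x = 0}.ncard : ℝ) ≤
        1 + (d * p * ((p : ℝ) ^ d - 1)) / ((p : ℝ) - 1)
        + (4 * c * d * p * ((p : ℝ) ^ d - 1) ^ 2 / ((p : ℝ) - 1))
            * (1 + d * logb p (2 * d / Real.log p))) := by
  have hpres := pres_addComplexity f
  have hdpos : 0 < d := by rw [← hd]; exact Module.finrank_pos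
  have hone := one_le_discBound p d hp.out.one_lt hdpos
  have hp1' : (1 : ℝ) < p := by exact_mod_cast hp.out.one_lt
  have hpd : (0 : ℝ) ≤ (p : ℝ) ^ d - 1 := by
    linarith [one_le_pow₀ hp1'.le (n := d)]
  have hp0 : (0 : ℝ) < (p : ℝ) - 1 := by linarith
  have hW : (0 : ℝ) ≤ (d * p * ((p : ℝ) ^ d - 1)) / ((p : ℝ) - 1) := by positivity
  have heq : (4 * c * d * p * ((p : ℝ) ^ d - 1) ^ 2 / ((p : ℝ) - 1))
            * (1 + d * logb p (2 * d / Real.log p)) =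
      (d * p * ((p : ℝ) ^ d - 1)) / ((p : ℝ) - 1) *
      (2 * ((p : ℝ) ^ d - 1) * discBound p d) := by
    rw [discBound, ← hc]
    ring
  have hT : (0 : ℝ) ≤ (d * p * ((p : ℝ) ^ d - 1)) / ((p : ℝ) - 1) *
      (2 * ((p : ℝ) ^ d - 1) * discBound p d) := by positivity
  have hle1 : addComplexity f ≤ 1 →
      ({x : L | f.eval x = 0}.ncard : ℝ) ≤
        1 + (d * p * ((p : ℝ) ^ d - 1)) / ((p : ℝ) - 1) := by
    intro h1
    refine ncard_le_of_nonzero f hf _ (fun S hS => ?_)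
    obtain h | h : addComplexity f = 0 ∨ addComplexity f = 1 := by omega
    · rw [h] at hpres
      rw [count_zero f hf hpres S hS, Nat.cast_zero]
      exact hW
    · rw [h] at hpres
      subst hd
      exact count_one p f hf hpres S hS
  refine ⟨hle1, fun h2 => ?_⟩
  rw [heq]
  obtain h | h : addComplexity f ≤ 1 ∨ addComplexity f = 2 := by omega
  · linarith [hle1 h]
  · rw [h] at hpres
    rw [add_assoc]
    refine ncard_le_of_nonzero f hf _ (fun S hS => ?_)
    subst hd
    exact count_two p f hf hpres S hS

end Main

theorem padic_root_count_low_additive_complexity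
    (p : ℕ) [hp : Fact p.Prime] (L : Type*) [Field L] [Algebra ℚ_[p] L]
    [FiniteDimensional ℚ_[p] L] (d : ℕ) (hd : Module.finrank ℚ_[p] L = d)
    (c : ℝ) (hc : c = Real.exp 1 / (Real.exp 1 - 1))
    (f : L[X]) (hf : f ≠ 0) :
    (addComplexity f ≤ 1 →
      ({x : L | f.eval x = 0}.ncard : ℝ) ≤
        1 + (d * p * ((p : ℝ) ^ d - 1)) / ((p : ℝ) - 1)) ∧
    (addComplexity f ≤ 2 →
      ({x : L | f.eval x = 0}.ncard : ℝ) ≤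
        1 + (d * p * ((p : ℝ) ^ d - 1)) / ((p : ℝ) - 1)
        + (4 * c * d * p * ((p : ℝ) ^ d - 1) ^ 2 / ((p : ℝ) - 1))
            * (1 + d * logb p (2 * d / Real.log p))) := by
  let := spectralNorm.normedField ℚ_[p] L
  let := spectralNorm.normedAlgebra ℚ_[p] L
  have : IsUltrametricDist L :=
    IsUltrametricDist.isUltrametricDist_of_forall_norm_add_le_max_norm isNonarchimedean_spectralNorm
  exact main_normed p d hd c hc f hf
end

section
/- Let α, β, γ, δ, ε, λ, μ, ν be nonnegative integers and c_1, d_1, c_2, d_2, c_3 ∈ ℚ_2. If the polynomial f(x) = c_3·x^α·(c_1·x^β + d_1·x^γ)^δ·[c_2·(c_1·x^β + d_1·x^γ)^ε + d_2·x^λ·(c_1·x^β + d_1·x^γ)^μ]^ν is not identically zero, then f has at most 35 distinct roots in ℚ_2 (and hence at most 35 distinct rational roots). -/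
open Polynomial

lemma aux_w (k : ℕ) : ∃ w : ℤ_[2], 16 * w * ((k + 3).factorial : ℤ_[2]) = 4 ^ (k + 3) := by
  obtain ⟨a, m, hm, h⟩ := Nat.exists_eq_two_pow_mul_odd (Nat.factorial_ne_zero (k + 3))
  have ha : a < k + 3 := by
    by_contra hcon
    have h1 : 2 ^ (k + 3) ∣ (k + 3).factorial := by
      rw [h]; exact (pow_dvd_pow 2 (by omega)).mul_right m
    have h2 := Nat.emultiplicity_two_factorial_lt (n := k + 3) (by omega)
    exact absurd (le_emultiplicity_of_pow_dvd h1) (not_le.mpr h2)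
  have hu : IsUnit (m : ℤ_[2]) := by
    rw [PadicInt.isUnit_iff, PadicInt.norm_natCast_eq_one_iff]
    exact (Nat.coprime_two_left).mpr hm
  obtain ⟨u, hu⟩ := hu
  refine ⟨2 ^ (k + 2 - a + k) * (↑u⁻¹ : ℤ_[2]), ?_⟩
  rw [h]
  push_cast
  rw [← hu]
  have e1 : (16 : ℤ_[2]) = 2 ^ 4 := by norm_num
  have e2 : (4 : ℤ_[2]) = 2 ^ 2 := by norm_num
  have e3 : (↑u⁻¹ : ℤ_[2]) * u = 1 := by simp
  calc (16 : ℤ_[2]) * (2 ^ (k + 2 - a + k) * ↑u⁻¹) * (2 ^ a * ↑u)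
      = 2 ^ 4 * 2 ^ (k + 2 - a + k) * 2 ^ a * ((↑u⁻¹ : ℤ_[2]) * u) := by rw [e1]; ring
    _ = 2 ^ (4 + (k + 2 - a + k) + a) := by rw [e3, mul_one, ← pow_add, ← pow_add]
    _ = 4 ^ (k + 3) := by
      rw [e2, ← pow_mul]; congr 1; omega

noncomputable def auxW (N : ℕ) (a : ℤ_[2]) : ℤ_[2][X] :=
  ∑ k ∈ Finset.range N, C ((aux_w k).choose * (descPochhammer ℤ_[2] (k + 2)).eval a) * X ^ k

lemma auxW_sub (N : ℕ) (a b : ℤ_[2]) : ∃ H : ℤ_[2][X], auxW N b = auxW N a + C (b - a) * H := by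
  have : C (b - a) ∣ auxW N b - auxW N a := by
    unfold auxW
    rw [← Finset.sum_sub_distrib]
    refine Finset.dvd_sum fun k _ => ?_
    rw [← sub_mul, ← C_sub, ← mul_sub]
    refine Dvd.dvd.mul_right (_root_.map_dvd C (Dvd.dvd.mul_left ?_ _)) _
    exact sub_dvd_eval_sub _ _ _
  obtain ⟨H, hH⟩ := this
  exact ⟨H, by rw [← hH]; ring⟩

lemma aux_pow (N i : ℕ) (hN : i ≤ N) (z : ℤ_[2]) :
    (1 + 4 * z) ^ (i + 1) - 1 =
      (i + 1) * (4 * z * (1 + 2 * i * z + 4 * z ^ 2 * (auxW N i).eval z)) := by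
  have h1 : (1 + 4 * z) ^ (i + 1) =
      ∑ n ∈ Finset.range (N + 3), (4 * z) ^ n * ((i + 1).choose n : ℤ_[2]) := by
    rw [add_comm, add_pow]
    simp only [one_pow, mul_one]
    refine Finset.sum_subset (by intro x; simp; omega) ?_
    intro x _ hx
    rw [Nat.choose_eq_zero_of_lt (by simpa using hx)]; simp
  have h2 : ((i + 1).choose 2 : ℤ_[2]) * 2 = (i + 1) * i := by
    have := Nat.descFactorial_eq_factorial_mul_choose (i + 1) 2
    have h : (i + 1).choose 2 * 2 = (i + 1) * i := by
      rw [Nat.succ_descFactorial_succ] at this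
      simp [Nat.factorial] at this; linarith
    exact_mod_cast h
  have h3 : ∀ k, ((4 * z) ^ (k + 3) * ((i + 1).choose (k + 3) : ℤ_[2])) =
      (i + 1) * (16 * z ^ 3 * ((aux_w k).choose * (descPochhammer ℤ_[2] (k + 2)).eval (i : ℤ_[2]) * z ^ k)) := by
    intro k
    rw [descPochhammer_eval_eq_descFactorial]
    have hw := (aux_w k).choose_spec
    have h : (i + 1) * i.descFactorial (k + 2) = (k + 3).factorial * (i + 1).choose (k + 3) := by
      rw [← Nat.succ_descFactorial_succ, Nat.descFactorial_eq_factorial_mul_choose]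
    have h' : ((i : ℤ_[2]) + 1) * i.descFactorial (k + 2) = (k + 3).factorial * (i + 1).choose (k + 3) := by
      exact_mod_cast h
    generalize (aux_w k).choose = w at hw ⊢
    rw [mul_pow, ← hw]
    linear_combination (-16 * w * z ^ (k+3)) * h'
  rw [h1, Finset.sum_range_succ', Finset.sum_range_succ', Finset.sum_range_succ']
  simp only [add_assoc, Nat.reduceAdd]
  simp only [h3]
  rw [← Finset.mul_sum, ← Finset.mul_sum]
  simp only [auxW, eval_finsetSum, eval_mul, eval_C, eval_pow, eval_X]
  simp
  linear_combination (8 * z ^ 2) * h2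

lemma aux_two (a : ℤ_[2]) : 1 + 2 * a ≠ 0 := by
  intro h
  have h2 : (2 : ℤ_[2]) * (-a) = 1 := by linear_combination -h
  have : IsUnit (2 : ℤ_[2]) := IsUnit.of_mul_eq_one _ h2
  exact (PadicInt.prime_p (p := 2)).not_isUnit (by simpa using this)

lemma aux_tf (z : ℤ_[2]) (n : ℕ) (hn : n ≠ 0) (h : (1 + 4 * z) ^ n = 1) : z = 0 := by
  obtain ⟨i, rfl⟩ := Nat.exists_eq_succ_of_ne_zero hn
  have := aux_pow i i le_rfl z
  rw [Nat.succ_eq_add_one] at h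
  rw [h, sub_self] at this
  have h1 : (i : ℤ_[2]) + 1 ≠ 0 := by exact_mod_cast Nat.succ_ne_zero i
  have h2 := aux_two (i * z + 2 * z ^ 2 * (auxW i i).eval z)
  have h3 : ((i : ℤ_[2]) + 1) * (4 * z * (1 + 2 * (i * z + 2 * z ^ 2 * (auxW i i).eval z))) = 0 := by
    rw [this]; ring
  simpa [h1, h2] using h3

lemma aux_dich (s d : ℤ_[2]) : s ∣ d ∨ ∃ e, s = 2 * d * e := by
  rcases ValuationRing.dvd_total s d with h | ⟨e, he⟩
  · exact Or.inl h
  · by_cases hu : IsUnit e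
    · left
      rw [he]; exact (hu.mul_right_dvd).mpr dvd_rfl
    · right
      have : (2 : ℤ_[2]) ∣ e := by
        have := (PadicInt.norm_lt_one_iff_dvd e).mp (PadicInt.mem_nonunits.mp hu)
        simpa using this
      obtain ⟨e', rfl⟩ := this
      exact ⟨e', by rw [he]; ring⟩

lemma aux_core (i j : ℕ) (hij : i ≠ j) (S T : ℤ_[2]) (hST : ¬ (S = 0 ∧ T = 0)) (z₁ z₂ : ℤ_[2])
    (h1 : z₁ ≠ 0) (h2 : z₂ ≠ 0) (h12 : z₁ ≠ z₂) (N : ℕ)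
    (H : ∀ z, z = z₁ ∨ z = z₂ → S * (4 * z * (1 + 2 * i * z + 4 * z ^ 2 * (auxW N i).eval z)) +
      T * (4 * z * (1 + 2 * j * z + 4 * z ^ 2 * (auxW N j).eval z)) = 0) : False := by
  obtain ⟨G, hG⟩ := auxW_sub N i j
  set W := auxW N i
  have key : ∀ z, z = z₁ ∨ z = z₂ →
      (S + T) * (1 + 2 * (i * z + 2 * z ^ 2 * W.eval z)) +
        (T * (j - i)) * (2 * (z + 2 * z ^ 2 * G.eval z)) = 0 := by
    intro z hz
    have hz0 : z ≠ 0 := by rcases hz with rfl | rfl <;> assumption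
    have := H z hz
    rw [hG] at this
    simp only [eval_add, eval_mul, eval_C] at this
    have h4 : (4 * z) ≠ 0 := mul_ne_zero (by norm_num) hz0
    apply mul_left_cancel₀ h4
    rw [mul_zero]
    linear_combination this
  have hji : (j : ℤ_[2]) - i ≠ 0 := by
    rw [sub_ne_zero]; exact_mod_cast hij.symm
  rcases aux_dich (S + T) (T * (j - i)) with ⟨e, he⟩ | ⟨e, he⟩
  · have := key z₁ (Or.inl rfl)
    rw [he] at this
    have h3 : (S + T) * (1 + 2 * ((i * z₁ + 2 * z₁ ^ 2 * W.eval z₁) +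
      e * (z₁ + 2 * z₁ ^ 2 * G.eval z₁))) = 0 := by rw [← this]; ring
    have h4 : S + T = 0 := by simpa [aux_two] using h3
    rw [h4, zero_mul] at he
    have hT : T = 0 := by simpa [hji] using he
    exact hST ⟨by simpa [hT] using h4, hT⟩
  · by_cases hd : T * ((j : ℤ_[2]) - i) = 0
    · have hT : T = 0 := by simpa [hji] using hd
      rw [hd] at he
      exact hST ⟨by simpa [hT] using he, hT⟩
    · have k2 : ∀ z, z = z₁ ∨ z = z₂ →
        e * (1 + 2 * (i * z + 2 * z ^ 2 * W.eval z)) + (z + 2 * z ^ 2 * G.eval z) = 0 := by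
        intro z hz
        have := key z hz
        rw [he] at this
        apply mul_left_cancel₀ (mul_ne_zero (two_ne_zero) hd)
        rw [mul_zero]
        linear_combination this
      have e1 := k2 z₁ (Or.inl rfl)
      have e2 := k2 z₂ (Or.inr rfl)
      obtain ⟨Q, hQ⟩ := sub_dvd_eval_sub z₁ z₂
        (C e * (C (i : ℤ_[2]) * X + 2 * X ^ 2 * W) + X ^ 2 * G)
      simp at hQ
      have : (z₁ - z₂) * (1 + 2 * Q) = 0 := by
        linear_combination e1 - e2 - 2 * hQ
      rcases mul_eq_zero.mp this with h | h
      · exact h12 (sub_eq_zero.mp h)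
      · exact aux_two _ h

/-- reduction of 2-adic units mod 4 -/
noncomputable def red : ℤ_[2]ˣ →* (ZMod (2 ^ 2))ˣ :=
  Units.map (PadicInt.toZModPow (p := 2) 2).toMonoidHom

noncomputable def emb : ℤ_[2]ˣ →* ℚ_[2]ˣ :=
  Units.map (PadicInt.Coe.ringHom (p := 2)).toMonoidHom

lemma emb_coe (u : ℤ_[2]ˣ) : (emb u : ℚ_[2]) = ((u : ℤ_[2]) : ℚ_[2]) := rfl

lemma emb_inj : Function.Injective emb := by
  intro a b h
  apply Units.ext
  apply Subtype.ext
  have := congrArg (fun u : ℚ_[2]ˣ => (u : ℚ_[2])) h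
  simpa [emb_coe] using this

lemma ker_form {u : ℤ_[2]ˣ} (hu : u ∈ red.ker) : ∃ z : ℤ_[2], (u : ℤ_[2]) = 1 + 4 * z := by
  have h1 : PadicInt.toZModPow (p := 2) 2 (u : ℤ_[2]) = 1 := by
    have := congrArg (fun u : (ZMod (2 ^ 2))ˣ => (u : ZMod (2 ^ 2))) (MonoidHom.mem_ker.mp hu)
    simpa [red] using this
  have h2 : (u : ℤ_[2]) - 1 ∈ RingHom.ker (PadicInt.toZModPow (p := 2) 2) := by
    rw [RingHom.mem_ker, map_sub, h1, map_one, sub_self]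
  rw [PadicInt.ker_toZModPow, Ideal.mem_span_singleton] at h2
  obtain ⟨z, hz⟩ := h2
  refine ⟨z, ?_⟩
  push_cast at hz
  linear_combination hz

lemma U_tf_nat {u : ℤ_[2]ˣ} (hu : u ∈ red.ker) {n : ℕ} (hn : n ≠ 0) (h : u ^ n = 1) : u = 1 := by
  obtain ⟨z, hz⟩ := ker_form hu
  have h1 : (1 + 4 * z) ^ n = 1 := by
    rw [← hz, ← Units.val_pow_eq_pow_val, h, Units.val_one]
  have := aux_tf z n hn h1
  apply Units.ext
  rw [hz, this]; simp

lemma U_tf {u : ℤ_[2]ˣ} (hu : u ∈ red.ker) {n : ℤ} (hn : n ≠ 0) (h : u ^ n = 1) : u = 1 := by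
  obtain ⟨k, rfl | rfl⟩ := Int.eq_nat_or_neg n
  · exact U_tf_nat hu (n := k) (by simpa using hn) (by simpa using h)
  · exact U_tf_nat hu (n := k) (by simpa using hn) (by simpa using h)

lemma core_nat (i j : ℕ) (hij : i ≠ j) (A B : ℚ_[2]) (hAB : ¬ (A = 0 ∧ B = 0)) (t₁ t₂ : ℤ_[2]ˣ)
    (m1 : t₁ ∈ red.ker) (m2 : t₂ ∈ red.ker)
    (h1 : t₁ ≠ 1) (h2 : t₂ ≠ 1) (h12 : t₁ ≠ t₂)
    (H : ∀ t, t = t₁ ∨ t = t₂ → A * ((emb t : ℚ_[2]) ^ (i + 1) - 1) +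
      B * ((emb t : ℚ_[2]) ^ (j + 1) - 1) = 0) : False := by
  classical
  obtain ⟨⟨b, hb⟩, hb'⟩ := IsLocalization.exist_integer_multiples_of_finset
    (nonZeroDivisors ℤ_[2]) ({A, B} : Finset ℚ_[2])
  obtain ⟨a1, ha1⟩ := hb' A (by simp)
  obtain ⟨a2, ha2⟩ := hb' B (by simp)
  have hb0 : b ≠ 0 := nonZeroDivisors.ne_zero hb
  have hbQ : (b : ℚ_[2]) ≠ 0 := fun h => hb0 (Subtype.ext h)
  have ha1' : (a1 : ℚ_[2]) = b * A := by simpa [Algebra.smul_def] using ha1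
  have ha2' : (a2 : ℚ_[2]) = b * B := by simpa [Algebra.smul_def] using ha2
  have H' : ∀ t : ℤ_[2]ˣ, t = t₁ ∨ t = t₂ → a1 * ((t : ℤ_[2]) ^ (i + 1) - 1) +
      a2 * ((t : ℤ_[2]) ^ (j + 1) - 1) = 0 := by
    intro t ht
    have := H t ht
    rw [emb_coe] at this
    apply Subtype.ext
    push_cast
    rw [ha1', ha2']
    linear_combination (b : ℚ_[2]) * this
  obtain ⟨z₁, hz₁⟩ := ker_form m1
  obtain ⟨z₂, hz₂⟩ := ker_form m2
  refine aux_core i j hij (a1 * (i + 1)) (a2 * (j + 1)) ?_ z₁ z₂ ?_ ?_ ?_ (max i j) ?_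
  · have hi : (i : ℤ_[2]) + 1 ≠ 0 := by exact_mod_cast Nat.succ_ne_zero i
    have hj : (j : ℤ_[2]) + 1 ≠ 0 := by exact_mod_cast Nat.succ_ne_zero j
    rintro ⟨e1, e2⟩
    have f1 : a1 = 0 := by simpa [hi] using e1
    have f2 : a2 = 0 := by simpa [hj] using e2
    rw [f1] at ha1'; rw [f2] at ha2'
    exact hAB ⟨by simpa [hb0] using ha1'.symm, by simpa [hb0] using ha2'.symm⟩
  · rintro rfl; exact h1 (Units.ext (by simpa using hz₁))
  · rintro rfl; exact h2 (Units.ext (by simpa using hz₂))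
  · rintro rfl; exact h12 (Units.ext (by rw [hz₁, hz₂]))
  · have aux : ∀ (t : ℤ_[2]ˣ) (z : ℤ_[2]), t = t₁ ∨ t = t₂ → (t : ℤ_[2]) = 1 + 4 * z →
      a1 * (i + 1) * (4 * z * (1 + 2 * i * z + 4 * z ^ 2 * (auxW (max i j) i).eval z)) +
      a2 * (j + 1) * (4 * z * (1 + 2 * j * z + 4 * z ^ 2 * (auxW (max i j) j).eval z)) = 0 := by
      intro t z ht hz
      have := H' t ht
      rw [hz, aux_pow (max i j) i (le_max_left _ _), aux_pow (max i j) j (le_max_right _ _)] at this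
      rw [← this]; ring
    rintro z (rfl | rfl)
    · exact aux t₁ _ (Or.inl rfl) hz₁
    · exact aux t₂ _ (Or.inr rfl) hz₂

lemma core_lt (e0 e1 e2 : ℤ) (h01 : e0 < e1) (h02 : e0 < e2) (h12 : e1 ≠ e2)
    (A B D : ℚ_[2]) (hsum : D + A + B = 0) (hAB : ¬ (A = 0 ∧ B = 0)) (t₁ t₂ : ℤ_[2]ˣ)
    (m1 : t₁ ∈ red.ker) (m2 : t₂ ∈ red.ker)
    (h1 : t₁ ≠ 1) (h2 : t₂ ≠ 1) (ht12 : t₁ ≠ t₂)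
    (H : ∀ t, t = t₁ ∨ t = t₂ → D * (emb t : ℚ_[2]) ^ e0 + A * (emb t : ℚ_[2]) ^ e1 +
      B * (emb t : ℚ_[2]) ^ e2 = 0) : False := by
  obtain ⟨i, hi⟩ := Int.le.dest (Int.add_one_le_of_lt h01)
  obtain ⟨j, hj⟩ := Int.le.dest (Int.add_one_le_of_lt h02)
  refine core_nat i j (by omega) A B hAB t₁ t₂ m1 m2 h1 h2 ht12 ?_
  intro t ht
  have := H t ht
  have hne : (emb t : ℚ_[2]) ≠ 0 := (emb t).ne_zero
  have f1 : (emb t : ℚ_[2]) ^ e1 = (emb t : ℚ_[2]) ^ e0 * (emb t : ℚ_[2]) ^ (i + 1) := by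
    rw [← zpow_natCast, ← zpow_add₀ hne]; congr 1; push_cast; omega
  have f2 : (emb t : ℚ_[2]) ^ e2 = (emb t : ℚ_[2]) ^ e0 * (emb t : ℚ_[2]) ^ (j + 1) := by
    rw [← zpow_natCast, ← zpow_add₀ hne]; congr 1; push_cast; omega
  rw [f1, f2] at this
  apply mul_left_cancel₀ (zpow_ne_zero e0 hne)
  rw [mul_zero]
  linear_combination this - (emb t : ℚ_[2]) ^ e0 * hsum

lemma core3 (e0 e1 e2 : ℤ) (h01 : e0 ≠ e1) (h02 : e0 ≠ e2) (h12 : e1 ≠ e2)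
    (A B D : ℚ_[2]) (hsum : D + A + B = 0) (hA : A ≠ 0) (hB : B ≠ 0) (t₁ t₂ : ℤ_[2]ˣ)
    (m1 : t₁ ∈ red.ker) (m2 : t₂ ∈ red.ker)
    (h1 : t₁ ≠ 1) (h2 : t₂ ≠ 1) (ht12 : t₁ ≠ t₂)
    (H : ∀ t, t = t₁ ∨ t = t₂ → D * (emb t : ℚ_[2]) ^ e0 + A * (emb t : ℚ_[2]) ^ e1 +
      B * (emb t : ℚ_[2]) ^ e2 = 0) : False := by
  by_cases c : e0 < e1 ∧ e0 < e2
  · exact core_lt e0 e1 e2 c.1 c.2 h12 A B D hsum (by simp [hA]) t₁ t₂ m1 m2 h1 h2 ht12 H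
  by_cases c' : e1 < e2
  · refine core_lt e1 e0 e2 (by omega) c' h02 D B A (by rw [← hsum]; ring) (by simp [hB])
      t₁ t₂ m1 m2 h1 h2 ht12 fun t ht => ?_
    rw [← H t ht]; ring
  · refine core_lt e2 e0 e1 (by omega) (by omega) h01 D A B (by rw [← hsum]; ring) (by simp [hA])
      t₁ t₂ m1 m2 h1 h2 ht12 fun t ht => ?_
    rw [← H t ht]; ring

lemma param (m k : ℤ) (hm : m ≠ 0) : ∃ g m' k' : ℤ, g ≠ 0 ∧ m = g * m' ∧ k = g * k' ∧
    ∀ u ∈ red.ker, ∀ v ∈ red.ker, v ^ m = u ^ k → ∃ t ∈ red.ker, u = t ^ m' ∧ v = t ^ k' := by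
  have hg : (Int.gcd m k : ℤ) ≠ 0 := by
    simp [Int.gcd_eq_zero_iff, hm]
  obtain ⟨m', hm'⟩ := Int.gcd_dvd_left m k
  obtain ⟨k', hk'⟩ := Int.gcd_dvd_right m k
  refine ⟨Int.gcd m k, m', k', hg, hm', hk', ?_⟩
  intro u hu v hv h
  have hbez := Int.gcd_eq_gcd_ab m k
  set a := Int.gcdA m k
  set b := Int.gcdB m k
  set g : ℤ := (Int.gcd m k : ℤ)
  have hab : m' * a + k' * b = 1 := by
    apply mul_left_cancel₀ hg
    linear_combination -hbez - a * hm' - b * hk'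
  have hvu : v ^ m' = u ^ k' := by
    have : v ^ m' * (u ^ k')⁻¹ = 1 := by
      apply U_tf (n := g) (red.ker.mul_mem (red.ker.zpow_mem hv _)
        (red.ker.inv_mem (red.ker.zpow_mem hu _))) hg
      rw [mul_zpow, inv_zpow, ← zpow_mul, ← zpow_mul, mul_comm m', mul_comm k', ← hm', ← hk', h]
      simp
    exact mul_inv_eq_one.mp this
  refine ⟨u ^ a * v ^ b, red.ker.mul_mem (red.ker.zpow_mem hu _) (red.ker.zpow_mem hv _), ?_, ?_⟩
  · rw [mul_zpow, ← zpow_mul, ← zpow_mul, mul_comm b, zpow_mul v, hvu, ← zpow_mul, ← zpow_add,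
      mul_comm a, hab, zpow_one]
  · rw [mul_zpow, ← zpow_mul, ← zpow_mul, mul_comm a, zpow_mul u, ← hvu, ← zpow_mul, ← zpow_add,
      mul_comm b, hab, zpow_one]

lemma fiber (β γ : ℕ) (m k : ℤ) (hβγ : β ≠ γ) (hm : m ≠ 0) (hβ : k ≠ β * m) (hγ : k ≠ γ * m)
    (c₁ d₁ x₀ y₀ : ℚ_[2]) (hc : c₁ ≠ 0) (hd : d₁ ≠ 0) (hx : x₀ ≠ 0)
    (h0 : c₁ * x₀ ^ β + d₁ * x₀ ^ γ = y₀)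
    (u₁ v₁ u₂ v₂ : ℤ_[2]ˣ) (mu1 : u₁ ∈ red.ker) (mu2 : u₂ ∈ red.ker)
    (mv1 : v₁ ∈ red.ker) (mv2 : v₂ ∈ red.ker) (n1 : u₁ ≠ 1) (n2 : u₂ ≠ 1) (n12 : u₁ ≠ u₂)
    (e1 : v₁ ^ m = u₁ ^ k) (e2 : v₂ ^ m = u₂ ^ k)
    (h1 : c₁ * (x₀ * emb u₁) ^ β + d₁ * (x₀ * emb u₁) ^ γ = y₀ * emb v₁)
    (h2 : c₁ * (x₀ * emb u₂) ^ β + d₁ * (x₀ * emb u₂) ^ γ = y₀ * emb v₂) : False := by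
  obtain ⟨g, m', k', hg, hm', hk', hp⟩ := param m k hm
  obtain ⟨t₁, mt1, ht1, ht1'⟩ := hp u₁ mu1 v₁ mv1 e1
  obtain ⟨t₂, mt2, ht2, ht2'⟩ := hp u₂ mu2 v₂ mv2 e2
  have hm0 : m' ≠ 0 := by rintro rfl; simp at hm'; exact hm hm'
  refine core3 k' (β * m') (γ * m') ?_ ?_ ?_ (c₁ * x₀ ^ β) (d₁ * x₀ ^ γ) (-y₀)
    (by rw [← h0]; ring) (mul_ne_zero hc (pow_ne_zero _ hx)) (mul_ne_zero hd (pow_ne_zero _ hx)) t₁ t₂ mt1 mt2 ?_ ?_ ?_ ?_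
  · rintro rfl; apply hβ; rw [hk', hm']; ring
  · rintro rfl; apply hγ; rw [hk', hm']; ring
  · intro h; exact hβγ (by exact_mod_cast mul_right_cancel₀ hm0 h)
  · rintro rfl; exact n1 (by simp [ht1])
  · rintro rfl; exact n2 (by simp [ht2])
  · rintro rfl; exact n12 (by rw [ht1, ht2])
  · have aux : ∀ t u v : ℤ_[2]ˣ, u = t ^ m' → v = t ^ k' →
        c₁ * (x₀ * emb u) ^ β + d₁ * (x₀ * emb u) ^ γ = y₀ * emb v →
        -y₀ * (emb t : ℚ_[2]) ^ k' + c₁ * x₀ ^ β * (emb t : ℚ_[2]) ^ (β * m') +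
        d₁ * x₀ ^ γ * (emb t : ℚ_[2]) ^ (γ * m') = 0 := by
      intro t u v hu hv h
      rw [hu, hv, map_zpow, map_zpow, Units.val_zpow_eq_zpow_val, Units.val_zpow_eq_zpow_val,
        mul_pow, mul_pow] at h
      rw [mul_comm (β : ℤ), mul_comm (γ : ℤ), zpow_mul, zpow_mul, zpow_natCast, zpow_natCast]
      linear_combination h
    rintro t (rfl | rfl)
    · exact aux _ _ _ ht1 ht1' h1
    · exact aux _ _ _ ht2 ht2' h2

lemma exists_unit (x : ℚ_[2]) (hx : x ≠ 0) : ∃ u : ℤ_[2]ˣ, x = 2 ^ x.valuation * emb u := by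
  have h2 : (2 : ℚ_[2]) ≠ 0 := two_ne_zero
  have hn : ‖x * 2 ^ (-x.valuation)‖ = 1 := by
    rw [norm_mul, norm_zpow, Padic.norm_eq_zpow_neg_valuation hx]
    have : ‖(2 : ℚ_[2])‖ = 2⁻¹ := by simpa using Padic.norm_p (p := 2)
    rw [this, inv_zpow]
    push_cast
    rw [mul_inv_cancel₀ (zpow_ne_zero _ two_ne_zero)]
  refine ⟨PadicInt.mkUnits hn, ?_⟩
  rw [emb_coe, PadicInt.mkUnits_eq, mul_left_comm, ← zpow_add₀ h2]
  simp

open Classical in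
noncomputable def sg (x : ℚ_[2]) : (ZMod (2 ^ 2))ˣ :=
  if h : x ≠ 0 then red (exists_unit x h).choose else 1

lemma same_class {x y : ℚ_[2]} (hx : x ≠ 0) (hy : y ≠ 0) (hv : x.valuation = y.valuation)
    (hs : sg x = sg y) : ∃ u ∈ red.ker, y = x * emb u := by
  rw [sg, sg, dif_pos hx, dif_pos hy] at hs
  have h1 := (exists_unit x hx).choose_spec
  have h2 := (exists_unit y hy).choose_spec
  set a := (exists_unit x hx).choose
  set b := (exists_unit y hy).choose
  refine ⟨a⁻¹ * b, by simp [MonoidHom.mem_ker, hs], ?_⟩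
  rw [h2, ← hv]
  conv_rhs => rw [h1]
  simp [mul_assoc]

lemma sg_card : Fintype.card (ZMod (2 ^ 2))ˣ = 2 := by
  rw [ZMod.card_units_eq_totient]; decide

lemma val_zpow (x : ℚ_[2]) (n : ℤ) : (x ^ n).valuation = n * x.valuation := by
  simp

lemma zp_card (n : ℤ) (hn : n ≠ 0) (e : ℚ_[2]) (s : Finset ℚ_[2])
    (hs : ∀ x ∈ s, x ≠ 0 ∧ x ^ n = e) : s.card ≤ 2 := by
  refine le_of_le_of_eq (b := (Finset.univ : Finset (ZMod (2 ^ 2))ˣ).card) ?_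
    (by rw [Finset.card_univ, sg_card])
  refine Finset.card_le_card_of_injOn sg (by simp) ?_
  intro x hx y hy h
  obtain ⟨hx0, hxe⟩ := hs x hx
  obtain ⟨hy0, hye⟩ := hs y hy
  have hv : x.valuation = y.valuation := by
    have := val_zpow x n
    rw [hxe, ← hye, val_zpow] at this
    exact (mul_left_cancel₀ hn this).symm
  obtain ⟨u, hu, rfl⟩ := same_class hx0 hy0 hv h
  rw [← hxe, mul_zpow] at hye
  have h1 : (emb u : ℚ_[2]) ^ n = 1 := by
    apply mul_left_cancel₀ (zpow_ne_zero n hx0); rw [hye, mul_one]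
  have h2 : u ^ n = 1 := by
    apply emb_inj
    apply Units.ext
    rw [map_zpow, Units.val_zpow_eq_zpow_val, h1]; simp
  rw [U_tf hu hn h2]; simp

lemma binom_card (a b : ℚ_[2]) (i j : ℕ) (h : C a * X ^ i + C b * X ^ j ≠ 0) (s : Finset ℚ_[2])
    (hs : ∀ x ∈ s, x ≠ 0 ∧ a * x ^ i + b * x ^ j = 0) : s.card ≤ 2 := by
  by_cases hij : i = j
  · subst hij
    have : s = ∅ := by
      apply Finset.eq_empty_of_forall_notMem
      intro x hx
      obtain ⟨h0, h1⟩ := hs x hx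
      rw [← add_mul] at h1
      have h2 : a + b = 0 := by simpa [h0] using h1
      apply h
      rw [← add_mul, ← C_add, h2]; simp
    simp [this]
  by_cases ha : a = 0
  · have : s = ∅ := by
      apply Finset.eq_empty_of_forall_notMem
      intro x hx
      obtain ⟨h0, h1⟩ := hs x hx
      have h2 : b = 0 := by simpa [h0, ha] using h1
      apply h
      simp [ha, h2]
    simp [this]
  refine zp_card ((i : ℤ) - j) (by omega) (-b / a) s ?_
  intro x hx
  obtain ⟨h0, h1⟩ := hs x hx
  refine ⟨h0, ?_⟩
  rw [zpow_sub₀ h0, zpow_natCast, zpow_natCast, div_eq_div_iff (pow_ne_zero _ h0) ha]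
  linear_combination h1

lemma val_cases {a b y : ℚ_[2]} (ha : a ≠ 0) (hb : b ≠ 0) (hy : y ≠ 0) (h : a + b = y) :
    a.valuation = b.valuation ∨ a.valuation = y.valuation ∨ b.valuation = y.valuation := by
  have key : ∀ {p q : ℚ_[2]}, p ≠ 0 → q ≠ 0 → ‖p‖ = ‖q‖ → p.valuation = q.valuation := by
    intro p q hp hq hpq
    rw [Padic.norm_eq_zpow_neg_valuation hp, Padic.norm_eq_zpow_neg_valuation hq] at hpq
    have := zpow_right_injective₀ (a := ((2 : ℕ) : ℝ)) (by norm_num) (by norm_num) hpq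
    simpa using this
  by_cases hab : ‖a‖ = ‖b‖
  · exact Or.inl (key ha hb hab)
  · have := Padic.add_eq_max_of_ne hab
    rw [h] at this
    rcases max_choice ‖a‖ ‖b‖ with h' | h'
    · exact Or.inr (Or.inl (key ha hy (by rw [this, h'])))
    · exact Or.inr (Or.inr (key hb hy (by rw [this, h'])))

lemma div_of_mul {n v w : ℤ} (hn : n ≠ 0) (h : n * v = w) : v = w / n := by
  rw [← h, Int.mul_ediv_cancel_left _ hn]

lemma gen_card (β γ : ℕ) (m k : ℤ) (hβγ : β ≠ γ) (hm : m ≠ 0) (hβ : k ≠ β * m) (hγ : k ≠ γ * m)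
    (c₁ d₁ c : ℚ_[2]) (hc₁ : c₁ ≠ 0) (hd₁ : d₁ ≠ 0) (hc : c ≠ 0) (s : Finset ℚ_[2])
    (hs : ∀ x ∈ s, x ≠ 0 ∧ c₁ * x ^ β + d₁ * x ^ γ ≠ 0 ∧
      (c₁ * x ^ β + d₁ * x ^ γ) ^ m = c * x ^ k) : s.card ≤ 24 := by
  classical
  set g : ℚ_[2] → ℚ_[2] := fun x => c₁ * x ^ β + d₁ * x ^ γ with hg
  set V : Finset ℤ := {(d₁.valuation - c₁.valuation) / ((β : ℤ) - γ),
    (c.valuation - m * c₁.valuation) / (β * m - k),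
    (c.valuation - m * d₁.valuation) / (γ * m - k)} with hV
  have hvm : ∀ x ∈ s, m * (g x).valuation = c.valuation + k * x.valuation := by
    intro x hx
    obtain ⟨h0, h1, h2⟩ := hs x hx
    have := congrArg Padic.valuation h2
    rw [val_zpow, Padic.valuation_mul hc (zpow_ne_zero _ h0), val_zpow] at this
    exact this
  have hval : ∀ x ∈ s, x.valuation ∈ V := by
    intro x hx
    obtain ⟨h0, h1, h2⟩ := hs x hx
    have hm' := hvm x hx
    have hx1 := pow_ne_zero β h0
    have hx2 := pow_ne_zero γ h0
    have := val_cases (mul_ne_zero hc₁ hx1) (mul_ne_zero hd₁ hx2) h1 rfl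
    rw [Padic.valuation_mul hc₁ hx1, Padic.valuation_mul hd₁ hx2, Padic.valuation_pow,
      Padic.valuation_pow] at this
    simp only [hV, Finset.mem_insert, Finset.mem_singleton]
    rcases this with h | h | h
    · left
      exact div_of_mul (by omega) (by linear_combination h)
    · right; left
      refine div_of_mul (sub_ne_zero.mpr hβ.symm) ?_
      change _ = (g x).valuation at h
      linear_combination m * h + hm'
    · right; right
      refine div_of_mul (sub_ne_zero.mpr hγ.symm) ?_
      change _ = (g x).valuation at h
      linear_combination m * h + hm'
  set F : ℚ_[2] → ℤ × (ZMod (2 ^ 2))ˣ × (ZMod (2 ^ 2))ˣ :=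
    fun x => (x.valuation, sg x, sg (g x)) with hF
  have himg : (s.image F).card ≤ 12 := by
    have hsub : s.image F ⊆ V ×ˢ (Finset.univ : Finset ((ZMod (2 ^ 2))ˣ × (ZMod (2 ^ 2))ˣ)) := by
      intro p hp
      obtain ⟨x, hx, rfl⟩ := Finset.mem_image.mp hp
      simp [hF, hval x hx]
    refine (Finset.card_le_card hsub).trans ?_
    rw [Finset.card_product, Finset.card_univ, Fintype.card_prod, sg_card]
    have : V.card ≤ 3 := Finset.card_le_three
    omega
  have hfib : ∀ p ∈ s.image F, (s.filter (fun x => F x = p)).card ≤ 2 := by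
    intro p hp
    by_contra hcon
    push Not at hcon
    obtain ⟨x₀, x₁, x₂, m0, m1, m2, n01, n02, n12⟩ := Finset.two_lt_card_iff.mp hcon
    rw [Finset.mem_filter] at m0 m1 m2
    have step : ∀ x, x ∈ s → F x = F x₀ → ∃ u ∈ red.ker, ∃ v ∈ red.ker, x = x₀ * emb u ∧
        g x = g x₀ * emb v ∧ v ^ m = u ^ k := by
      intro x hx hxF
      obtain ⟨a0, a1, a2⟩ := hs x₀ m0.1
      obtain ⟨b0, b1, b2⟩ := hs x hx
      simp only [hF, Prod.mk.injEq] at hxF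
      obtain ⟨f1, f2, f3⟩ := hxF
      obtain ⟨u, hu, hxu⟩ := same_class a0 b0 f1.symm f2.symm
      have hgv : (g x₀).valuation = (g x).valuation := by
        apply mul_left_cancel₀ hm
        rw [hvm x hx, hvm x₀ m0.1, f1]
      obtain ⟨v, hv, hxv⟩ := same_class a1 b1 hgv f3.symm
      refine ⟨u, hu, v, hv, hxu, hxv, ?_⟩
      apply emb_inj
      apply Units.ext
      rw [map_zpow, map_zpow, Units.val_zpow_eq_zpow_val, Units.val_zpow_eq_zpow_val]
      change (g x) ^ m = _ at b2
      change g x = g x₀ * _ at hxv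
      change (g x₀) ^ m = _ at a2
      have hne : (g x₀) ^ m ≠ 0 := zpow_ne_zero _ a1
      rw [hxv, hxu, mul_zpow, mul_zpow] at b2
      apply mul_left_cancel₀ hne
      rw [b2, a2]; ring
    obtain ⟨u₁, hu1, v₁, hv1, e1, g1, p1⟩ := step x₁ m1.1 (m1.2.trans m0.2.symm)
    obtain ⟨u₂, hu2, v₂, hv2, e2, g2, p2⟩ := step x₂ m2.1 (m2.2.trans m0.2.symm)
    obtain ⟨a0, a1, a2⟩ := hs x₀ m0.1
    refine fiber β γ m k hβγ hm hβ hγ c₁ d₁ x₀ (g x₀) hc₁ hd₁ a0 rfl u₁ v₁ u₂ v₂ hu1 hu2 hv1 hv2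
      ?_ ?_ ?_ p1 p2 ?_ ?_
    · rintro rfl; exact n01 (by rw [e1]; simp)
    · rintro rfl; exact n02 (by rw [e2]; simp)
    · rintro rfl; exact n12 (by rw [e1, e2])
    · rw [← g1, ← e1]
    · rw [← g2, ← e2]
  have := Finset.card_le_mul_card_image s 2 hfib
  omega

lemma deg_card (β γ : ℕ) (m : ℤ) (hβγ : β ≠ γ) (hm : m ≠ 0)
    (c₁ d₁ c : ℚ_[2]) (hd₁ : d₁ ≠ 0) (s : Finset ℚ_[2])
    (hs : ∀ x ∈ s, x ≠ 0 ∧ c₁ * x ^ β + d₁ * x ^ γ ≠ 0 ∧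
      (c₁ * x ^ β + d₁ * x ^ γ) ^ m = c * x ^ (β * m)) : s.card ≤ 4 := by
  classical
  set F : ℚ_[2] → ℚ_[2] := fun x => (c₁ * x ^ β + d₁ * x ^ γ) / x ^ β with hF
  have himg : (s.image F).card ≤ 2 := by
    apply zp_card m hm c
    intro y hy
    obtain ⟨x, hx, rfl⟩ := Finset.mem_image.mp hy
    obtain ⟨h0, h1, h2⟩ := hs x hx
    refine ⟨div_ne_zero h1 (pow_ne_zero _ h0), ?_⟩
    rw [hF]
    simp only
    rw [div_zpow, h2, zpow_mul, zpow_natCast, mul_div_assoc, div_self, mul_one]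
    exact zpow_ne_zero _ (pow_ne_zero _ h0)
  have hfib : ∀ p ∈ s.image F, (s.filter (fun x => F x = p)).card ≤ 2 := by
    intro p hp
    apply zp_card ((γ : ℤ) - β) (by omega) ((p - c₁) / d₁)
    intro x hx
    rw [Finset.mem_filter] at hx
    obtain ⟨h0, h1, h2⟩ := hs x hx.1
    refine ⟨h0, ?_⟩
    rw [← hx.2, hF, zpow_sub₀ h0, zpow_natCast, zpow_natCast]
    have := pow_ne_zero β h0
    field_simp
    ring
  have := Finset.card_le_mul_card_image s 2 hfib
  omega

lemma all_card (β γ : ℕ) (m k : ℤ) (hβγ : β ≠ γ) (hm : m ≠ 0)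
    (c₁ d₁ c : ℚ_[2]) (hc₁ : c₁ ≠ 0) (hd₁ : d₁ ≠ 0) (hc : c ≠ 0) (s : Finset ℚ_[2])
    (hs : ∀ x ∈ s, x ≠ 0 ∧ c₁ * x ^ β + d₁ * x ^ γ ≠ 0 ∧
      (c₁ * x ^ β + d₁ * x ^ γ) ^ m = c * x ^ k) : s.card ≤ 24 := by
  by_cases hβ : k = β * m
  · subst hβ
    have := deg_card β γ m hβγ hm c₁ d₁ c hd₁ s hs
    omega
  by_cases hγ : k = γ * m
  · subst hγ
    have := deg_card γ β m hβγ.symm hm d₁ c₁ c hc₁ s (by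
      intro x hx
      rw [add_comm]; exact hs x hx)
    omega
  exact gen_card β γ m k hβγ hm hβ hγ c₁ d₁ c hc₁ hd₁ hc s hs

/-- nonzero roots of the bracket that are not roots of the inner binomial -/
lemma bracket_card (β γ ε l μ : ℕ) (c₁ d₁ c₂ d₂ : ℚ_[2])
    (h : C c₂ * (C c₁ * X ^ β + C d₁ * X ^ γ) ^ ε +
          C d₂ * X ^ l * (C c₁ * X ^ β + C d₁ * X ^ γ) ^ μ ≠ 0) (s : Finset ℚ_[2])
    (hs : ∀ x ∈ s, x ≠ 0 ∧ (c₁ * x ^ β + d₁ * x ^ γ ≠ 0 ∨ C c₁ * X ^ β + C d₁ * X ^ γ = 0) ∧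
      c₂ * (c₁ * x ^ β + d₁ * x ^ γ) ^ ε + d₂ * x ^ l * (c₁ * x ^ β + d₁ * x ^ γ) ^ μ = 0) :
    s.card ≤ 24 := by
  by_cases hmono : ∃ e n, C c₁ * X ^ β + C d₁ * X ^ γ = C e * X ^ n
  · obtain ⟨e, n, he⟩ := hmono
    have hev : ∀ x, c₁ * x ^ β + d₁ * x ^ γ = e * x ^ n := by
      intro x
      have := congrArg (eval x) he
      simpa using this
    have : s.card ≤ 2 := by
      apply binom_card (c₂ * e ^ ε) (d₂ * e ^ μ) (n * ε) (l + n * μ)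
      · rw [he] at h
        intro h'
        apply h
        rw [← h']
        simp only [C_mul, C_pow]
        ring
      · intro x hx
        obtain ⟨h0, -, h2⟩ := hs x hx
        refine ⟨h0, ?_⟩
        rw [hev] at h2
        rw [← h2]; ring
    omega
  have hβγ : β ≠ γ := by
    rintro rfl
    exact hmono ⟨c₁ + d₁, β, by rw [C_add]; ring⟩
  have hc₁ : c₁ ≠ 0 := by
    rintro rfl
    exact hmono ⟨d₁, γ, by simp⟩
  have hd₁ : d₁ ≠ 0 := by
    rintro rfl
    exact hmono ⟨c₁, β, by simp⟩
  have hne : C c₁ * X ^ β + C d₁ * X ^ γ ≠ 0 := fun h' => hmono ⟨0, 0, by rw [h']; simp⟩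
  have hs' : ∀ x ∈ s, x ≠ 0 ∧ c₁ * x ^ β + d₁ * x ^ γ ≠ 0 ∧
      c₂ * (c₁ * x ^ β + d₁ * x ^ γ) ^ ε + d₂ * x ^ l * (c₁ * x ^ β + d₁ * x ^ γ) ^ μ = 0 := by
    intro x hx
    obtain ⟨h0, h1, h2⟩ := hs x hx
    exact ⟨h0, h1.resolve_right hne, h2⟩
  by_cases hεμ : ε = μ
  · subst hεμ
    have : s.card ≤ 2 := by
      apply binom_card c₂ d₂ 0 l
      · intro h'
        apply h
        have : C c₂ + C d₂ * X ^ l = 0 := by simpa using h'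
        rw [← add_mul, this, zero_mul]
      · intro x hx
        obtain ⟨h0, h1, h2⟩ := hs' x hx
        rw [← add_mul] at h2
        refine ⟨h0, ?_⟩
        simpa [pow_ne_zero ε h1] using (mul_eq_zero.mp h2).resolve_right (pow_ne_zero ε h1)
    omega
  by_cases hc₂ : c₂ = 0
  · have : s = ∅ := by
      apply Finset.eq_empty_of_forall_notMem
      intro x hx
      obtain ⟨h0, h1, h2⟩ := hs' x hx
      have : d₂ = 0 := by
        simpa [hc₂, h0, pow_ne_zero μ h1] using h2
      exact h (by simp [hc₂, this])
    simp [this]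
  by_cases hd₂ : d₂ = 0
  · have : s = ∅ := by
      apply Finset.eq_empty_of_forall_notMem
      intro x hx
      obtain ⟨h0, h1, h2⟩ := hs' x hx
      rw [hd₂] at h2
      simp only [zero_mul, add_zero] at h2
      exact mul_ne_zero hc₂ (pow_ne_zero _ h1) h2
    simp [this]
  apply all_card β γ ((ε : ℤ) - μ) l hβγ (by omega) c₁ d₁ (-d₂ / c₂) hc₁ hd₁
    (div_ne_zero (neg_ne_zero.mpr hd₂) hc₂)
  intro x hx
  obtain ⟨h0, h1, h2⟩ := hs' x hx
  refine ⟨h0, h1, ?_⟩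
  rw [zpow_sub₀ h1, zpow_natCast, zpow_natCast, zpow_natCast, div_mul_eq_mul_div,
    div_eq_div_iff (pow_ne_zero _ h1) hc₂]
  linear_combination h2

theorem twoadic_root_count_explicit_sigma_three_example
    (α β γ δ ε l μ ν : ℕ) (c₁ d₁ c₂ d₂ c₃ : ℚ_[2])
    (f : Polynomial ℚ_[2])
    (hfdef : f = C c₃ * X ^ α * (C c₁ * X ^ β + C d₁ * X ^ γ) ^ δ *
        (C c₂ * (C c₁ * X ^ β + C d₁ * X ^ γ) ^ ε +
          C d₂ * X ^ l * (C c₁ * X ^ β + C d₁ * X ^ γ) ^ μ) ^ ν)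
    (hf : f ≠ 0) :
    {x : ℚ_[2] | f.eval x = 0}.ncard ≤ 35 ∧
    {q : ℚ | f.eval (q : ℚ_[2]) = 0}.ncard ≤ 35 := by
  classical
  have hset : {x : ℚ_[2] | f.eval x = 0} = (f.roots.toFinset : Set ℚ_[2]) := by
    ext x; simp [hf]
  have hfin : {x : ℚ_[2] | f.eval x = 0}.Finite := by
    rw [hset]; exact Finset.finite_toSet _
  have main : {x : ℚ_[2] | f.eval x = 0}.ncard ≤ 35 := by
    rw [hset, Set.ncard_coe_finset]
    set s := f.roots.toFinset with hs
    have hmem : ∀ x ∈ s, f.eval x = 0 := by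
      intro x hx
      simpa [hs, hf] using hx
    set G : ℚ_[2][X] := C c₁ * X ^ β + C d₁ * X ^ γ with hG
    set K : ℚ_[2][X] := C c₂ * G ^ ε + C d₂ * X ^ l * G ^ μ with hK
    have hc₃ : c₃ ≠ 0 := by
      rintro rfl; apply hf; rw [hfdef]; simp
    set s1 := s.filter (fun x => x ≠ 0 ∧ G ≠ 0 ∧ G.eval x = 0) with hs1
    set s2 := s.filter (fun x => x ≠ 0 ∧ (G.eval x ≠ 0 ∨ G = 0) ∧ K ≠ 0 ∧ K.eval x = 0) with hs2
    have hcov : s ⊆ {0} ∪ (s1 ∪ s2) := by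
      intro x hx
      by_cases hx0 : x = 0
      · simp [hx0]
      by_cases hg : G ≠ 0 ∧ G.eval x = 0
      · simp only [Finset.mem_union, hs1, Finset.mem_filter]
        exact Or.inr (Or.inl ⟨hx, hx0, hg⟩)
      · have hg' : G.eval x ≠ 0 ∨ G = 0 := by tauto
        simp only [Finset.mem_union, hs2, Finset.mem_filter]
        refine Or.inr (Or.inr ⟨hx, hx0, hg', ?_⟩)
        have he := hmem x hx
        rw [hfdef] at he hf
        have hGd : G ^ δ ≠ 0 := fun h' => hf (by rw [h']; simp)
        have hKn : K ^ ν ≠ 0 := fun h' => hf (by rw [h']; simp)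
        have hGe : (G.eval x) ^ δ ≠ 0 := by
          rcases hg' with h' | h'
          · exact pow_ne_zero _ h'
          · have hδ : δ = 0 := by
              by_contra hδ
              exact hGd (by rw [h', zero_pow hδ])
            simp [hδ]
        simp only [eval_mul, eval_C, eval_pow, eval_X] at he
        have hKe : (K.eval x) ^ ν = 0 := by
          simpa only [mul_eq_zero, hc₃, pow_ne_zero α hx0, hGe, false_or] using he
        have hν : ν ≠ 0 := by
          rintro rfl; simp at hKe
        exact ⟨fun h' => hKn (by rw [h', zero_pow hν]), pow_eq_zero_iff hν |>.mp hKe⟩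
    have c1 : s1.card ≤ 2 := by
      by_cases hG0 : G = 0
      · simp [hs1, hG0]
      apply binom_card c₁ d₁ β γ hG0
      intro x hx
      rw [hs1, Finset.mem_filter] at hx
      refine ⟨hx.2.1, ?_⟩
      simpa [hG] using hx.2.2.2
    have c2 : s2.card ≤ 24 := by
      by_cases hK0 : K = 0
      · simp [hs2, hK0]
      apply bracket_card β γ ε l μ c₁ d₁ c₂ d₂ hK0
      intro x hx
      rw [hs2, Finset.mem_filter] at hx
      obtain ⟨-, h0, h1, -, h2⟩ := hx
      have hGx : G.eval x = c₁ * x ^ β + d₁ * x ^ γ := by simp [hG]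
      refine ⟨h0, ?_, ?_⟩
      · rw [← hGx]; exact h1
      · rw [← hGx, ← h2]; simp [hK]
    have h1 := Finset.card_le_card hcov
    have h2 := Finset.card_union_le {0} (s1 ∪ s2)
    have h3 := Finset.card_union_le s1 s2
    rw [Finset.card_singleton] at h2
    omega
  refine ⟨main, le_trans ?_ main⟩
  refine Set.ncard_le_ncard_of_injOn (fun q : ℚ => (q : ℚ_[2])) ?_ ?_ hfin
  · intro q hq; exact hq
  · intro a _ b _ h; exact Rat.cast_injective h
end
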